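/- Under the Frenet frame setup, assume NR is noncylindrical ((κ_ν(u),κ_t(u)) ≠ (0,0) for all u) and nondevelopable (κ_t does not vanish identically), and let q = (u₀,w₀) be a singular point of NR, i.e. κ_t(u₀) = 0 and w₀·κ_ν(u₀) = 1. Then: (1) NR has a cross cap at q iff κ_t'(u₀) ≠ 0; (2) NR has an S₁⁻ singularity at q iff κ_t'(u₀) = 0 and κ_t''(u₀)·(2κ_s(u₀)κ_ν'(u₀) + κ_t''(u₀)) < 0; (3) NR has an S₁⁺ singularity at q iff κ_t'(u₀) = 0, κ_ν'(u₀) ≠ 0 and κ_t''(u₀)·(2κ_s(u₀)κ_ν'(u₀) + κ_t''(u₀)) > 0. -/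

import Mathlib

open Filter

noncomputable section

/-- Vectors in ℝ³, modeled as `Fin 3 → ℝ`. -/
abbrev R3 : Type := Fin 3 → ℝ

/-- The Euclidean inner product on ℝ³. -/
def dot3 (a b : R3) : ℝ := a 0 * b 0 + a 1 * b 1 + a 2 * b 2

/-- The determinant det(a,b,c) of three vectors of ℝ³. -/
def det3 (a b c : R3) : ℝ := Matrix.det (Matrix.of ![a, b, c])

/-- Partial derivative in the `u`-direction. -/
def pu {E : Type*} [NormedAddCommGroup E] [NormedSpace ℝ E] (F : ℝ × ℝ → E) (p : ℝ × ℝ) : E :=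
  fderiv ℝ F p (1, 0)

/-- Partial derivative in the `w`-direction. -/
def pw {E : Type*} [NormedAddCommGroup E] [NormedSpace ℝ E] (F : ℝ × ℝ → E) (p : ℝ × ℝ) : E :=
  fderiv ℝ F p (0, 1)

/-- The Frenet-type frame setup along the singular locus γ̂: `{γ̂', ĥ, ν̂}` is an
orthonormal frame satisfying the Frenet-type equations with singular curvature κ_s,
limiting normal curvature κ_ν and cuspidal torsion κ_t. -/
structure FrenetSetup (γ h ν : ℝ → R3) (κs κν κt : ℝ → ℝ) : Prop where
  smooth_γ : ContDiff ℝ (⊤ : ℕ∞) γ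
  smooth_h : ContDiff ℝ (⊤ : ℕ∞) h
  smooth_ν : ContDiff ℝ (⊤ : ℕ∞) ν
  smooth_κs : ContDiff ℝ (⊤ : ℕ∞) κs
  smooth_κν : ContDiff ℝ (⊤ : ℕ∞) κν
  smooth_κt : ContDiff ℝ (⊤ : ℕ∞) κt
  unit_t : ∀ u, dot3 (deriv γ u) (deriv γ u) = 1
  unit_h : ∀ u, dot3 (h u) (h u) = 1
  unit_ν : ∀ u, dot3 (ν u) (ν u) = 1
  orth_th : ∀ u, dot3 (deriv γ u) (h u) = 0
  orth_tν : ∀ u, dot3 (deriv γ u) (ν u) = 0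
  orth_hν : ∀ u, dot3 (h u) (ν u) = 0
  frenet_t : ∀ u, deriv (deriv γ) u = κs u • h u + κν u • ν u
  frenet_h : ∀ u, deriv h u = (-κs u) • deriv γ u + κt u • ν u
  frenet_ν : ∀ u, deriv ν u = (-κν u) • deriv γ u - κt u • h u

/-- The normal ruled surface NR(u,w) = γ̂(u) + w·ν̂(u). -/
def NR (γ ν : ℝ → R3) (p : ℝ × ℝ) : R3 := γ p.1 + p.2 • ν p.1

/-- A map `φ` is a local diffeomorphism at `p` if it is C^∞ at `p` and admits a
local C^∞ inverse near `p`. -/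
def IsLocalDiffeoAt {E F : Type*} [NormedAddCommGroup E] [NormedSpace ℝ E]
    [NormedAddCommGroup F] [NormedSpace ℝ F] (φ : E → F) (p : E) : Prop :=
  ContDiffAt ℝ (⊤ : ℕ∞) φ p ∧ ∃ ψ : F → E, ContDiffAt ℝ (⊤ : ℕ∞) ψ (φ p) ∧
    (∀ᶠ x in nhds p, ψ (φ x) = x) ∧ (∀ᶠ y in nhds (φ p), φ (ψ y) = y)

/-- 𝒜-equivalence of map germs: the germ of `f` at `p` is 𝒜-equivalent to the germ of
`g` at `q` if `f` is carried to `g` by composing with diffeomorphism germs of the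
source and the target. -/
def AEquivAt (f : ℝ × ℝ → R3) (p : ℝ × ℝ) (g : ℝ × ℝ → R3) (q : ℝ × ℝ) : Prop :=
  ∃ (φ : ℝ × ℝ → ℝ × ℝ) (Φ : R3 → R3),
    IsLocalDiffeoAt φ q ∧ φ q = p ∧ IsLocalDiffeoAt Φ (f p) ∧
    ∀ᶠ x in nhds q, Φ (f (φ x)) = g x

/-!
After exchanging the parameters and translating `q` to the origin, `NR` becomes a germ `F(u, w)` at
`0` with `F_u ≠ 0` and `F_w = 0`. If `F_u` and `F_ww` are linearly independent, then `F` is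
`𝒜`-equivalent to `(u, w², w b(u, w²))` with `b(0) = 0`: choose `w` so that the second component is
`w²` up to a function of the first, and split the third into its even and odd parts in `w`. By
Whitney's theorem a smooth even function of `w` is a smooth function of `w²`; this follows from the
Fourier inversion formula, because `cos(ξ √t)` is an entire function of `t`. The germ is then a
cross cap when `b_u(0) ≠ 0`, and when `b = p(u) u² + w B(u, w)` it is `S₁^±` according to the sign
of `p(0) B(0)`.

Two quantities recognise the normal form without computing it. The determinant
`det(F_u, F_uw, F_ww)` at `0` is multiplied by a nonzero factor under `𝒜`-equivalence and detects
the cross cap. When it vanishes, the function `det(F_u, F_w, F_ww)` vanishes to second order at `0`,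
and its quadratic part is transformed by a linear change of `(u, w)` and multiplied by a nonzero
constant. Hence the sign of its discriminant is an invariant. For `(u, w², w (u² + ε w²))` it is
that of `ε`, and for `NR` it is that of `κ_t'' (2 κ_s κ_ν' + κ_t'')`.
-/

section RuledSurfaceSingularities

open scoped ContDiff Topology

section ParametricIntegral

open MeasureTheory

variable {Ω E G : Type*} [NormedAddCommGroup Ω] [NormedSpace ℝ Ω] [NormedAddCommGroup E]
  [NormedSpace ℝ E] [NormedAddCommGroup G] [NormedSpace ℝ G]

theorem continuous_iteratedFDeriv_prodMk {f : Ω × E → G} (hf : ContDiff ℝ ∞ f) (n : ℕ) (x : E) :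
    Continuous fun o => iteratedFDeriv ℝ n (fun y => f (o, y)) x := by
  have hslice : ∀ o, iteratedFDeriv ℝ n (fun y => f (o, y)) x =
      ContinuousMultilinearMap.compContinuousLinearMapL
        (fun _ : Fin n => ContinuousLinearMap.inr ℝ Ω E) (iteratedFDeriv ℝ n f (o, x)) := by
    intro o
    have htranslate : ContDiff ℝ ∞ fun q => f ((o, 0) + q) := hf.comp (by fun_prop)
    have := (ContinuousLinearMap.inr ℝ Ω E).iteratedFDeriv_comp_right htranslate x
      (mod_cast le_top : (n : WithTop ℕ∞) ≤ ∞)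
    rw [iteratedFDeriv_comp_add_left] at this
    simpa [Function.comp_def] using this
  have hcont : Continuous (iteratedFDeriv ℝ n f) :=
    hf.continuous_iteratedFDeriv (mod_cast le_top)
  simp only [hslice]
  fun_prop

variable [MeasurableSpace Ω] [OpensMeasurableSpace Ω] [SecondCountableTopology Ω]

theorem contDiff_integral_of_dominated {μ : Measure Ω} {f : Ω × E → G} (hf : ContDiff ℝ ∞ f)
    (hbound : ∀ n : ℕ, ∃ b : Ω → ℝ, Integrable b μ ∧
      ∀ᵐ o ∂μ, ∀ x, ‖iteratedFDeriv ℝ n (fun y => f (o, y)) x‖ ≤ b o) :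
    ContDiff ℝ ∞ fun x => ∫ o, f (o, x) ∂μ := by
  have hslice : ∀ o, ContDiff ℝ ∞ fun y => f (o, y) := fun o => hf.comp (by fun_prop)
  have hmeas : ∀ (n : ℕ) (x : E),
      AEStronglyMeasurable (fun o => iteratedFDeriv ℝ n (fun y => f (o, y)) x) μ :=
    fun n x => (continuous_iteratedFDeriv_prodMk hf n x).aestronglyMeasurable
  have hderiv : ∀ (n : ℕ) (o : Ω) (x : E), HasFDerivAt (iteratedFDeriv ℝ n fun y => f (o, y))
      (iteratedFDeriv ℝ (n + 1) (fun y => f (o, y)) x).curryLeft x :=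
    fun n o x => (hslice o).ftaylorSeries.fderiv n (mod_cast WithTop.coe_lt_top _) x
  have htaylor : HasFTaylorSeriesUpTo ∞ (fun x => ∫ o, f (o, x) ∂μ)
      fun x n => ∫ o, iteratedFDeriv ℝ n (fun y => f (o, y)) x ∂μ := by
    refine ⟨fun x => ?_, fun n _ x => ?_, fun n _ => ?_⟩
    · exact ((continuousMultilinearCurryFin0 ℝ E G).toContinuousLinearEquiv.integral_comp_comm
        _).symm
    · obtain ⟨b, hb, hle⟩ := hbound n
      obtain ⟨b', hb', hle'⟩ := hbound (n + 1)
      have hcurry := ContinuousLinearEquiv.integral_comp_comm (𝕜 := ℝ) (μ := μ)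
        (E := E [×n + 1]→L[ℝ] G) (F := E →L[ℝ] E [×n]→L[ℝ] G)
        (continuousMultilinearCurryLeftEquiv ℝ (fun _ => E) G).toContinuousLinearEquiv
        fun o => iteratedFDeriv ℝ (n + 1) (fun y => f (o, y)) x
      have hdiff := hasFDerivAt_integral_of_dominated_of_fderiv_le (𝕜 := ℝ) (μ := μ)
        (F := fun x o => iteratedFDeriv ℝ n (fun y => f (o, y)) x)
        (F' := fun x o => (iteratedFDeriv ℝ (n + 1) (fun y => f (o, y)) x).curryLeft)
        (x₀ := x) univ_mem (.of_forall (hmeas n))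
        (hb.mono' (hmeas n x) (hle.mono fun o h => h x))
        ((continuousMultilinearCurryLeftEquiv ℝ (fun _ : Fin (n + 1) => E)
          G).continuous.comp_aestronglyMeasurable (hmeas (n + 1) x))
        (hle'.mono fun o h y _ => (ContinuousMultilinearMap.curryLeft_norm _).trans_le (h y)) hb'
        (.of_forall fun o y _ => hderiv n o y)
      exact hdiff.congr_fderiv hcurry
    · obtain ⟨b, hb, hle⟩ := hbound n
      exact continuous_of_dominated (hmeas n) (fun x => hle.mono fun o h => h x) hb
        (.of_forall fun o => (hslice o).continuous_iteratedFDeriv (mod_cast le_top))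
  exact htaylor.contDiff

end ParametricIntegral
section BoundedDerivatives

open MeasureTheory

variable {E E' G : Type*} [NormedAddCommGroup E] [NormedSpace ℝ E] [NormedAddCommGroup E']
  [NormedSpace ℝ E'] [NormedAddCommGroup G] [NormedSpace ℝ G]

/-- Smooth maps all of whose derivatives are bounded: the kernels allowed in the parametric
integrals below. -/
structure HasBoundedDerivs (k : E → G) : Prop where
  contDiff : ContDiff ℝ ∞ k
  exists_bound : ∀ n : ℕ, ∃ C, ∀ x, ‖iteratedFDeriv ℝ n k x‖ ≤ C

theorem norm_iteratedFDeriv_comp_clm_le {k : E → G} (hk : ContDiff ℝ ∞ k) (L : E' →L[ℝ] E) (n : ℕ)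
    (x : E') : ‖iteratedFDeriv ℝ n (k ∘ L) x‖ ≤ ‖iteratedFDeriv ℝ n k (L x)‖ * ‖L‖ ^ n := by
  rw [L.iteratedFDeriv_comp_right hk x (mod_cast le_top)]
  simpa using ContinuousMultilinearMap.norm_compContinuousLinearMap_le
    (iteratedFDeriv ℝ n k (L x)) fun _ => L

namespace HasBoundedDerivs

theorem of_hasCompactSupport {k : E → G} (hk : ContDiff ℝ ∞ k) (hs : HasCompactSupport k) :
    HasBoundedDerivs k :=
  ⟨hk, fun n => (hs.iteratedFDeriv n).exists_bound_of_continuous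
    (hk.continuous_iteratedFDeriv (mod_cast le_top))⟩

theorem of_iteratedDeriv {k : ℝ → G} (hk : ContDiff ℝ ∞ k)
    (h : ∀ n : ℕ, ∃ C, ∀ x, ‖iteratedDeriv n k x‖ ≤ C) : HasBoundedDerivs k :=
  ⟨hk, by simpa only [norm_iteratedFDeriv_eq_norm_iteratedDeriv] using h⟩

theorem comp_clm {k : E → G} (hk : HasBoundedDerivs k) (L : E' →L[ℝ] E) :
    HasBoundedDerivs (k ∘ L) := by
  refine ⟨hk.contDiff.comp L.contDiff, fun n => ?_⟩
  obtain ⟨C, hC⟩ := hk.exists_bound n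
  refine ⟨C * ‖L‖ ^ n, fun x => (norm_iteratedFDeriv_comp_clm_le hk.contDiff L n x).trans ?_⟩
  gcongr
  exact hC _

theorem clm_comp {k : E → G} (hk : HasBoundedDerivs k) (L : G →L[ℝ] E') :
    HasBoundedDerivs (L ∘ k) := by
  refine ⟨L.contDiff.comp hk.contDiff, fun n => ?_⟩
  obtain ⟨C, hC⟩ := hk.exists_bound n
  refine ⟨‖L‖ * C, fun x => (L.norm_iteratedFDeriv_comp_left hk.contDiff.contDiffAt
    (mod_cast le_top)).trans ?_⟩
  gcongr
  exact hC x

variable {𝔸 : Type*} [NormedRing 𝔸] [NormedAlgebra ℝ 𝔸]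

theorem mul {k l : E → 𝔸} (hk : HasBoundedDerivs k) (hl : HasBoundedDerivs l) :
    HasBoundedDerivs fun x => k x * l x := by
  refine ⟨hk.contDiff.mul hl.contDiff, fun n => ?_⟩
  choose C hC using hk.exists_bound
  choose D hD using hl.exists_bound
  refine ⟨∑ i ∈ Finset.range (n + 1), n.choose i * C i * D (n - i), fun x =>
    (norm_iteratedFDeriv_mul_le hk.contDiff hl.contDiff x (mod_cast le_top)).trans ?_⟩
  have hC0 : ∀ i, 0 ≤ C i := fun i => (norm_nonneg _).trans (hC i x)
  gcongr with i
  · exact mul_nonneg (Nat.cast_nonneg _) (hC0 i)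
  · exact hC i x
  · exact hD _ x

variable {Ω : Type*} [NormedAddCommGroup Ω] [NormedSpace ℝ Ω] [MeasurableSpace Ω]
  [OpensMeasurableSpace Ω] [SecondCountableTopology Ω]

theorem contDiff_integral_mul_comp {μ : Measure Ω} {k : E → 𝔸} (hk : HasBoundedDerivs k)
    {a : Ω → 𝔸} (ha : ContDiff ℝ ∞ a) {L : Ω → E' →L[ℝ] E} (hL : ContDiff ℝ ∞ L)
    (hint : ∀ n : ℕ, Integrable (fun o => ‖a o‖ * ‖L o‖ ^ n) μ) :
    ContDiff ℝ ∞ fun x => ∫ o, a o * k (L o x) ∂μ := by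
  have hk' := hk.contDiff
  refine contDiff_integral_of_dominated (f := fun q : Ω × E' => a q.1 * k (L q.1 q.2))
    (by fun_prop) fun n => ?_
  obtain ⟨C, hC⟩ := hk.exists_bound n
  refine ⟨fun o => C * (‖a o‖ * ‖L o‖ ^ n), (hint n).const_mul C, .of_forall fun o x => ?_⟩
  calc ‖iteratedFDeriv ℝ n (fun y => a o * k (L o y)) x‖
      ≤ ‖ContinuousLinearMap.mul ℝ 𝔸 (a o)‖ * ‖iteratedFDeriv ℝ n (k ∘ L o) x‖ :=
        (ContinuousLinearMap.mul ℝ 𝔸 (a o)).norm_iteratedFDeriv_comp_left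
          (hk'.comp (L o).contDiff).contDiffAt (mod_cast le_top)
    _ ≤ ‖a o‖ * (C * ‖L o‖ ^ n) := by
        gcongr
        · exact ContinuousLinearMap.opNorm_mul_apply_le ..
        · exact (norm_iteratedFDeriv_comp_clm_le hk' (L o) n x).trans (by gcongr; exact hC _)
    _ = C * (‖a o‖ * ‖L o‖ ^ n) := by ring

end HasBoundedDerivs

end BoundedDerivatives
section CosineKernel

open FormalMultilinearSeries (ofScalars ofScalarsSum ofScalarsSum_eq_tsum
  ofScalars_radius_eq_top_of_tendsto)

/-- The coefficients of the entire function `∑ (-t)ⁿ / (2n)!`. -/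
def cosSqrtCoeff (n : ℕ) : ℝ := (-1) ^ n / (2 * n).factorial

/-- The entire function `∑ (-t)ⁿ / (2n)!`, equal to `cos √t` for `0 ≤ t`. -/
def cosSqrt : ℝ → ℝ := ofScalarsSum cosSqrtCoeff

theorem cosSqrt_sq (v : ℝ) : cosSqrt (v ^ 2) = Real.cos v := by
  rw [cosSqrt, ofScalarsSum_eq_tsum, ← (Real.hasSum_cos v).tsum_eq]
  refine tsum_congr fun n => ?_
  rw [cosSqrtCoeff, smul_eq_mul, ← pow_mul]
  ring

theorem cosSqrt_of_nonneg {t : ℝ} (ht : 0 ≤ t) : cosSqrt t = Real.cos √t := by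
  rw [← cosSqrt_sq, Real.sq_sqrt ht]

theorem radius_ofScalars_cosSqrtCoeff : (ofScalars ℝ cosSqrtCoeff).radius = ⊤ := by
  have hratio : ∀ n, ‖cosSqrtCoeff n.succ‖ / ‖cosSqrtCoeff n‖ ≤ 1 / ((n : ℝ) + 1) := by
    intro n
    have hfact : ((2 * n.succ).factorial : ℝ) =
        (2 * n + 2) * ((2 * n + 1) * (2 * n).factorial) := by
      rw [show 2 * n.succ = 2 * n + 1 + 1 by lia, Nat.factorial_succ, Nat.factorial_succ]
      push_cast
      ring
    simp only [cosSqrtCoeff, norm_div, norm_pow, norm_neg, norm_one, one_pow, RCLike.norm_natCast]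
    rw [hfact, div_div_div_cancel_left' _ _ one_ne_zero,
      div_le_div_iff₀ (by positivity) (by positivity)]
    have : (0 : ℝ) < (2 * n).factorial := by positivity
    nlinarith [mul_nonneg n.cast_nonneg this.le, mul_nonneg (mul_self_nonneg (n : ℝ)) this.le]
  refine ofScalars_radius_eq_top_of_tendsto ℝ _ (.of_forall fun n => ?_)
    (squeeze_zero (fun n => by positivity) hratio tendsto_one_div_add_atTop_nhds_zero_nat)
  rw [cosSqrtCoeff]
  positivity

theorem contDiff_cosSqrt : ContDiff ℝ ∞ cosSqrt := by
  have hball := FormalMultilinearSeries.hasFPowerSeriesOnBall (ofScalars ℝ cosSqrtCoeff)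
    (by simp [radius_ofScalars_cosSqrtCoeff])
  have := hball.analyticOnNhd
  rw [radius_ofScalars_cosSqrtCoeff, Metric.eball_top_eq_univ] at this
  exact this.contDiff

open Polynomial in
theorem hasDerivAt_eval_inv_sqrt_mul_trig (P Q : ℝ[X]) {t : ℝ} (ht : 0 < t) :
    HasDerivAt (fun s => P.eval (√s)⁻¹ * Real.cos √s + Q.eval (√s)⁻¹ * Real.sin √s)
      ((Q * C (1 / 2) * X - derivative P * C (1 / 2) * X ^ 3).eval (√t)⁻¹ * Real.cos √t +
        (-P * C (1 / 2) * X - derivative Q * C (1 / 2) * X ^ 3).eval (√t)⁻¹ * Real.sin √t) t := by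
  have hsqrt := Real.hasDerivAt_sqrt ht.ne'
  have hpos : 0 < √t := Real.sqrt_pos.2 ht
  have hinv := hsqrt.inv hpos.ne'
  convert! (((P.hasDerivAt _).comp t hinv).mul hsqrt.cos).add
    (((Q.hasDerivAt _).comp t hinv).mul hsqrt.sin) using 1
  simp only [eval_mul, eval_neg, eval_C, eval_pow, eval_X, eval_sub, Function.comp_apply,
    Pi.inv_apply]
  field_simp
  ring

theorem exists_iteratedDeriv_cosSqrt_eq (n : ℕ) : ∃ P Q : Polynomial ℝ, ∀ t, 0 < t →
    iteratedDeriv n cosSqrt t =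
      P.eval (√t)⁻¹ * Real.cos √t + Q.eval (√t)⁻¹ * Real.sin √t := by
  induction n with
  | zero => exact ⟨1, 0, fun t ht => by simp [cosSqrt_of_nonneg ht.le]⟩
  | succ n ih =>
    obtain ⟨P, Q, h⟩ := ih
    have hderiv := fun t ht => hasDerivAt_eval_inv_sqrt_mul_trig P Q (t := t) ht
    refine ⟨_, _, fun t ht => Eq.trans ?_ (hderiv t ht).deriv⟩
    rw [iteratedDeriv_succ, EventuallyEq.deriv_eq ((lt_mem_nhds ht).mono h)]

theorem exists_bound_iteratedDeriv_cosSqrt (n : ℕ) :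
    ∃ C, ∀ t, 1 < t → ‖iteratedDeriv n cosSqrt t‖ ≤ C := by
  obtain ⟨P, Q, h⟩ := exists_iteratedDeriv_cosSqrt_eq n
  obtain ⟨C, hC⟩ := isCompact_Icc.exists_bound_of_continuousOn (s := Set.Icc (0 : ℝ) 1)
    P.continuous.continuousOn
  obtain ⟨D, hD⟩ := isCompact_Icc.exists_bound_of_continuousOn (s := Set.Icc (0 : ℝ) 1)
    Q.continuous.continuousOn
  refine ⟨C + D, fun t ht => ?_⟩
  have hmem : (√t)⁻¹ ∈ Set.Icc (0 : ℝ) 1 :=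
    ⟨by positivity, inv_le_one_of_one_le₀ (Real.one_le_sqrt.2 ht.le)⟩
  rw [h t (one_pos.trans ht)]
  refine (norm_add_le _ _).trans (add_le_add ?_ ?_)
  · rw [norm_mul]
    exact (mul_le_of_le_one_right (norm_nonneg _) (Real.abs_cos_le_one _)).trans (hC _ hmem)
  · rw [norm_mul]
    exact (mul_le_of_le_one_right (norm_nonneg _) (Real.abs_sin_le_one _)).trans (hD _ hmem)

/-- A modification of `cosSqrt` on `t < 0`, where `cosSqrt` grows, that vanishes for `t ≤ -1`. -/
def cosSqrtCutoff (t : ℝ) : ℝ := Real.smoothTransition (t + 1) * cosSqrt t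

theorem cosSqrtCutoff_of_nonneg {t : ℝ} (ht : 0 ≤ t) : cosSqrtCutoff t = cosSqrt t := by
  rw [cosSqrtCutoff, Real.smoothTransition.one_of_one_le (by linarith), one_mul]

theorem cosSqrtCutoff_of_le {t : ℝ} (ht : t ≤ -1) : cosSqrtCutoff t = 0 := by
  rw [cosSqrtCutoff, Real.smoothTransition.zero_of_nonpos (by linarith), zero_mul]

theorem hasBoundedDerivs_cosSqrtCutoff : HasBoundedDerivs cosSqrtCutoff := by
  have hsmooth : ContDiff ℝ ∞ cosSqrtCutoff :=
    (Real.smoothTransition.contDiff.comp (by fun_prop)).mul contDiff_cosSqrt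
  refine .of_iteratedDeriv hsmooth fun n => ?_
  obtain ⟨C, hC⟩ := isCompact_Icc.exists_bound_of_continuousOn (s := Set.Icc (-1 : ℝ) 1)
    (hsmooth.continuous_iteratedDeriv n (mod_cast le_top)).continuousOn
  obtain ⟨D, hD⟩ := exists_bound_iteratedDeriv_cosSqrt n
  refine ⟨max (max C D) 0, fun t => ?_⟩
  rcases lt_or_ge t (-1) with hneg | hneg
  · have hzero : cosSqrtCutoff =ᶠ[𝓝 t] fun _ => 0 :=
      (gt_mem_nhds hneg).mono fun s hs => cosSqrtCutoff_of_le hs.le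
    simp [hzero.iteratedDeriv_eq]
  rcases le_or_gt t 1 with hpos | hpos
  · exact le_max_of_le_left (le_max_of_le_left (hC t ⟨hneg, hpos⟩))
  · have heq : cosSqrtCutoff =ᶠ[𝓝 t] cosSqrt :=
      (lt_mem_nhds hpos).mono fun s hs => cosSqrtCutoff_of_nonneg (one_pos.trans hs).le
    rw [heq.iteratedDeriv_eq]
    exact le_max_of_le_left (le_max_of_le_right (hD t hpos))

/-- The kernel `e^{iz} cos √t` of even Fourier inversion in the variables `(z, t)`, cut off in
`t < 0`. -/
def evenFourierKernel (x : ℝ × ℝ) : ℂ := Complex.exp (x.1 * Complex.I) * cosSqrtCutoff x.2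

theorem hasBoundedDerivs_exp_mul_I : HasBoundedDerivs fun x : ℝ => Complex.exp (x * Complex.I) := by
  have hiter : ∀ n : ℕ, iteratedDeriv n (fun x : ℝ => Complex.exp (x * Complex.I)) =
      fun x : ℝ => Complex.I ^ n * Complex.exp (x * Complex.I) := by
    intro n
    induction n with
    | zero => simp
    | succ n ih =>
      funext x
      have := (((hasDerivAt_id x).ofReal_comp.mul_const Complex.I).cexp.const_mul
        (Complex.I ^ n)).deriv
      rw [iteratedDeriv_succ, ih]
      refine this.trans ?_
      simp only [id, Complex.ofReal_one]
      ring
  have hsmooth : ContDiff ℝ ∞ fun x : ℝ => Complex.exp (x * Complex.I) :=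
    (Complex.ofRealCLM.contDiff.mul contDiff_const).cexp
  refine .of_iteratedDeriv hsmooth fun n => ⟨1, fun x => ?_⟩
  simp [hiter, Complex.norm_exp_ofReal_mul_I]

theorem hasBoundedDerivs_evenFourierKernel : HasBoundedDerivs evenFourierKernel :=
  (hasBoundedDerivs_exp_mul_I.comp_clm (ContinuousLinearMap.fst ℝ ℝ ℝ)).mul
    ((hasBoundedDerivs_cosSqrtCutoff.clm_comp Complex.ofRealCLM).comp_clm
      (ContinuousLinearMap.snd ℝ ℝ ℝ))

theorem two_mul_evenFourierKernel_sq (z v : ℝ) : 2 * evenFourierKernel (z, v ^ 2) =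
    Complex.exp ((z + v : ℝ) * Complex.I) + Complex.exp ((z - v : ℝ) * Complex.I) := by
  rw [evenFourierKernel, cosSqrtCutoff_of_nonneg (sq_nonneg v), cosSqrt_sq, Complex.ofReal_cos,
    Complex.cos, Complex.ofReal_add, Complex.ofReal_sub, add_mul, sub_mul, Complex.exp_add,
    sub_eq_add_neg, Complex.exp_add, neg_mul]
  ring

end CosineKernel
section Division

open MeasureTheory

theorem exists_contDiff_hasCompactSupport_eventuallyEq {E G : Type*} [NormedAddCommGroup E]
    [NormedSpace ℝ E] [HasContDiffBump E] [FiniteDimensional ℝ E] [NormedAddCommGroup G]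
    [NormedSpace ℝ G] {n : ℕ∞} {f : E → G} {p : E} (h : ∀ᶠ x in 𝓝 p, ContDiffAt ℝ n f x) :
    ∃ g : E → G, ContDiff ℝ n g ∧ HasCompactSupport g ∧ g =ᶠ[𝓝 p] f := by
  obtain ⟨ε, hε, hball⟩ := Metric.eventually_nhds_iff_ball.1 h
  let χ : ContDiffBump p := ⟨ε / 4, ε / 2, by positivity, by linarith⟩
  refine ⟨fun x => χ x • f x, contDiff_iff_contDiffAt.2 fun x => ?_,
    χ.hasCompactSupport.smul_right, χ.eventuallyEq_one.mono fun y hy => by simp [hy]⟩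
  by_cases hx : x ∈ Metric.ball p ε
  · exact χ.contDiff.contDiffAt.smul (hball x hx)
  · have hnot : x ∉ tsupport χ := fun hmem =>
      hx (Metric.closedBall_subset_ball (half_lt_self hε) (χ.tsupport_eq ▸ hmem))
    have hzero : (fun x => χ x • f x) =ᶠ[𝓝 x] fun _ => 0 :=
      (notMem_tsupport_iff_eventuallyEq.1 hnot).mono fun y hy => by simp [hy]
    exact contDiffAt_const.congr_of_eventuallyEq hzero

/-- The diagonal map `(z, v) ↦ (a z, b v)`. -/
def diagCLM (a b : ℝ) : (ℝ × ℝ) →L[ℝ] ℝ × ℝ :=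
  a • (ContinuousLinearMap.inl ℝ ℝ ℝ).comp (.fst ℝ ℝ ℝ) +
    b • (ContinuousLinearMap.inr ℝ ℝ ℝ).comp (.snd ℝ ℝ ℝ)

@[simp]
theorem diagCLM_apply (a b z v : ℝ) : diagCLM a b (z, v) = (a * z, b * v) := by
  simp [diagCLM]

theorem contDiff_diagCLM : ContDiff ℝ ∞ fun q : ℝ × ℝ => diagCLM q.1 q.2 := by
  unfold diagCLM
  fun_prop

theorem norm_diagCLM_le (a b : ℝ) : ‖diagCLM a b‖ ≤ |a| + |b| := by
  refine ContinuousLinearMap.opNorm_le_bound _ (by positivity) fun x => ?_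
  obtain ⟨z, v⟩ := x
  have hz : |z| ≤ ‖(z, v)‖ := le_max_left ..
  have hv : |v| ≤ ‖(z, v)‖ := le_max_right ..
  rw [diagCLM_apply, Prod.norm_mk, Real.norm_eq_abs, Real.norm_eq_abs, abs_mul, abs_mul]
  refine max_le ?_ ?_ <;> nlinarith [abs_nonneg a, abs_nonneg b, abs_nonneg z, abs_nonneg v]

theorem exists_eq_add_mul_of_hasCompactSupport {f : ℝ × ℝ → ℝ} (hf : ContDiff ℝ ∞ f)
    (hs : HasCompactSupport f) :
    ∃ M : ℝ × ℝ → ℝ, ContDiff ℝ ∞ M ∧ ∀ z v, f (z, v) = f (z, 0) + v * M (z, v) := by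
  have hpw : HasBoundedDerivs (pw f) :=
    (HasBoundedDerivs.of_hasCompactSupport (hf.fderiv_right (by simp)) (hs.fderiv ℝ)).clm_comp
      (ContinuousLinearMap.apply ℝ ℝ ((0, 1) : ℝ × ℝ))
  have hL : ContDiff ℝ ∞ fun s : ℝ => diagCLM 1 s :=
    contDiff_diagCLM.comp (contDiff_prodMk_right 1)
  have hM : ContDiff ℝ ∞ fun x => ∫ s in Set.Ioc (0 : ℝ) 1, 1 * pw f (diagCLM 1 s x) := by
    refine hpw.contDiff_integral_mul_comp (a := fun _ => 1) contDiff_const hL fun n => ?_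
    have hcont : Continuous fun s : ℝ => ‖(1 : ℝ)‖ * ‖diagCLM 1 s‖ ^ n := by
      have := hL.continuous
      fun_prop
    exact (hcont.integrableOn_Icc (a := 0) (b := 1)).mono_set Set.Ioc_subset_Icc_self
  refine ⟨_, hM, fun z v => ?_⟩
  have hderiv : ∀ s ∈ Set.uIcc (0 : ℝ) 1,
      HasDerivAt (fun s => f (z, s * v)) (v * pw f (z, s * v)) s := by
    intro s _
    have hline : HasDerivAt (fun s : ℝ => (z, s * v)) (v • ((0 : ℝ), (1 : ℝ))) s := by
      simpa using (hasDerivAt_const s z).prodMk ((hasDerivAt_id s).mul_const v)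
    have := (hf.differentiable (by simp) (z, s * v)).hasFDerivAt.comp_hasDerivAt s hline
    rwa [map_smul] at this
  have hcont : Continuous fun s => v * pw f (z, s * v) := by
    have := hpw.contDiff.continuous
    fun_prop
  have hftc := intervalIntegral.integral_eq_sub_of_hasDerivAt hderiv (hcont.intervalIntegrable _ _)
  rw [intervalIntegral.integral_of_le zero_le_one, integral_const_mul] at hftc
  simp only [one_mul, zero_mul, diagCLM_apply] at hftc ⊢
  linarith

theorem integrable_polynomial_norm_mul_norm {E G : Type*} [NormedAddCommGroup E] [NormedSpace ℝ E]
    [FiniteDimensional ℝ E] [MeasurableSpace E] [BorelSpace E] [NormedAddCommGroup G]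
    [NormedSpace ℝ G] (μ : Measure E) [μ.HasTemperateGrowth] (φ : SchwartzMap E G)
    (P : Polynomial ℝ) : Integrable (fun x => P.eval ‖x‖ * ‖φ x‖) μ := by
  induction P using Polynomial.induction_on' with
  | add P Q hP hQ => simpa only [Polynomial.eval_add, add_mul] using! hP.add hQ
  | monomial n a =>
    simpa only [Polynomial.eval_monomial, mul_assoc] using (φ.integrable_pow_mul μ n).const_mul a

/-- The frequency map `(z, t) ↦ (2π ξ₀ z, (2π ξ₁)² t)` of even Fourier inversion. -/
def freqCLM (ξ : EuclideanSpace ℝ (Fin 2)) : (ℝ × ℝ) →L[ℝ] ℝ × ℝ :=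
  diagCLM (2 * Real.pi * ξ 0) ((2 * Real.pi * ξ 1) ^ 2)

theorem contDiff_freqCLM : ContDiff ℝ ∞ freqCLM :=
  contDiff_diagCLM.comp (g := fun q : ℝ × ℝ => diagCLM q.1 q.2)
    (f := fun ξ : EuclideanSpace ℝ (Fin 2) => (2 * Real.pi * ξ 0, (2 * Real.pi * ξ 1) ^ 2))
    (by fun_prop)

theorem norm_freqCLM_le (ξ : EuclideanSpace ℝ (Fin 2)) :
    ‖freqCLM ξ‖ ≤ 2 * Real.pi * ‖ξ‖ + (2 * Real.pi) ^ 2 * ‖ξ‖ ^ 2 := by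
  have hpi := Real.two_pi_pos
  refine (norm_diagCLM_le _ _).trans ?_
  rw [abs_pow, abs_mul (2 * Real.pi), abs_mul (2 * Real.pi), abs_of_pos hpi, mul_pow]
  gcongr
  · exact PiLp.norm_apply_le ξ 0
  · exact PiLp.norm_apply_le ξ 1

theorem integrable_norm_mul_norm_freqCLM_pow (φ : SchwartzMap (EuclideanSpace ℝ (Fin 2)) ℂ)
    (n : ℕ) : Integrable fun ξ => ‖φ ξ‖ * ‖freqCLM ξ‖ ^ n := by
  open Polynomial in
  have hpoly := integrable_polynomial_norm_mul_norm volume φ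
    ((C (2 * Real.pi) * X + C ((2 * Real.pi) ^ 2) * X ^ 2) ^ n)
  refine hpoly.mono' (φ.continuous.norm.mul
    (contDiff_freqCLM.continuous.norm.pow n)).aestronglyMeasurable (.of_forall fun ξ => ?_)
  rw [Real.norm_of_nonneg (by positivity), mul_comm]
  simp only [Polynomial.eval_pow, Polynomial.eval_add, Polynomial.eval_mul, Polynomial.eval_C,
    Polynomial.eval_X]
  gcongr
  exact norm_freqCLM_le ξ

open scoped FourierTransform in
theorem integral_evenFourierKernel_eq (φ : SchwartzMap (EuclideanSpace ℝ (Fin 2)) ℂ)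
    (hφ : ∀ z v, φ !₂[z, -v] = φ !₂[z, v]) (z v : ℝ) :
    ∫ ξ, 𝓕 φ ξ * evenFourierKernel (freqCLM ξ (z, v ^ 2)) = φ !₂[z, v] := by
  have hinv : ∀ x, φ x =
      ∫ ξ, Complex.exp ((2 * Real.pi * inner ℝ ξ x : ℝ) * Complex.I) • 𝓕 φ ξ := by
    intro x
    rw [← Real.fourierInv_eq', ← SchwartzMap.fourierInv_coe, FourierTransform.fourierInv_fourier_eq]
  have hint : ∀ x, Integrable fun ξ =>
      Complex.exp ((2 * Real.pi * inner ℝ ξ x : ℝ) * Complex.I) • 𝓕 φ ξ := by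
    intro x
    refine (𝓕 φ).integrable.norm.mono' (Continuous.aestronglyMeasurable ?_) (.of_forall fun ξ => ?_)
    · have := (𝓕 φ).continuous
      fun_prop
    · rw [norm_smul, Complex.norm_exp_ofReal_mul_I, one_mul]
  have hinner : ∀ (ξ : EuclideanSpace ℝ (Fin 2)) (v : ℝ),
      2 * Real.pi * inner ℝ ξ !₂[z, v] = 2 * Real.pi * ξ 0 * z + 2 * Real.pi * ξ 1 * v := by
    intro ξ v
    simp only [PiLp.inner_apply, Fin.sum_univ_two]
    simp only [Fin.isValue, Matrix.cons_val_zero, RCLike.inner_apply, Real.ringHom_apply,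
      Matrix.cons_val_one, Matrix.cons_val_fin_one]
    ring
  have htwo : 2 * ∫ ξ, 𝓕 φ ξ * evenFourierKernel (freqCLM ξ (z, v ^ 2)) =
      φ !₂[z, v] + φ !₂[z, -v] := by
    rw [hinv !₂[z, v], hinv !₂[z, -v], ← integral_add (hint _) (hint _), ← integral_const_mul]
    congr 1 with ξ
    rw [freqCLM, diagCLM_apply, ← mul_pow, mul_left_comm, two_mul_evenFourierKernel_sq, hinner,
      hinner, mul_neg, ← sub_eq_add_neg, smul_eq_mul, smul_eq_mul]
    ring
  rw [hφ] at htwo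
  linear_combination htwo / 2

theorem exists_eq_comp_sq_of_hasCompactSupport {f : ℝ × ℝ → ℝ} (hf : ContDiff ℝ ∞ f)
    (hs : HasCompactSupport f) (heven : ∀ z v, f (z, -v) = f (z, v)) :
    ∃ a : ℝ × ℝ → ℝ, ContDiff ℝ ∞ a ∧ ∀ z v, f (z, v) = a (z, v ^ 2) := by
  let e : EuclideanSpace ℝ (Fin 2) ≃L[ℝ] ℝ × ℝ :=
    (EuclideanSpace.equiv (Fin 2) ℝ).trans (ContinuousLinearEquiv.finTwoArrow ℝ ℝ)
  have hsupp : HasCompactSupport fun x => (f (e x) : ℂ) :=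
    (hs.comp_homeomorph e.toHomeomorph).comp_left (g := ((↑) : ℝ → ℂ)) Complex.ofReal_zero
  let φ : SchwartzMap (EuclideanSpace ℝ (Fin 2)) ℂ :=
    hsupp.toSchwartzMap (Complex.ofRealCLM.contDiff.comp (hf.comp e.contDiff))
  have hφ : ∀ z v, φ !₂[z, v] = f (z, v) := fun z v => rfl
  have hsmooth := hasBoundedDerivs_evenFourierKernel.contDiff_integral_mul_comp
    (μ := volume) ((FourierTransform.fourier φ).smooth ⊤) contDiff_freqCLM
    (integrable_norm_mul_norm_freqCLM_pow _)
  refine ⟨_, Complex.reCLM.contDiff.comp hsmooth, fun z v => ?_⟩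
  have hrepr := integral_evenFourierKernel_eq φ (fun z v => by rw [hφ, hφ, heven]) z v
  simp only [Function.comp_apply, hrepr, hφ, Complex.reCLM_apply, Complex.ofReal_re]

end Division
section SmoothGerms

theorem exists_eventually_eq_add_mul {f : ℝ × ℝ → ℝ} (hf : ContDiff ℝ ∞ f) :
    ∃ M : ℝ × ℝ → ℝ, ContDiff ℝ ∞ M ∧ ∀ᶠ x in 𝓝 0, f x = f (x.1, 0) + x.2 * M x := by
  obtain ⟨g, hg, hsupp, hgf⟩ := exists_contDiff_hasCompactSupport_eventuallyEq (p := (0 : ℝ × ℝ))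
    (.of_forall fun x => hf.contDiffAt)
  obtain ⟨M, hM, hgM⟩ := exists_eq_add_mul_of_hasCompactSupport hg hsupp
  have haxis : Tendsto (fun x : ℝ × ℝ => (x.1, (0 : ℝ))) (𝓝 0) (𝓝 0) :=
    Continuous.tendsto' (by fun_prop) _ _ rfl
  refine ⟨M, hM, ?_⟩
  filter_upwards [hgf, haxis.eventually hgf] with x hx hx₀
  rw [← hx, ← hx₀, hgM]

theorem exists_eventually_eq_add_mul_real {f : ℝ → ℝ} (hf : ContDiff ℝ ∞ f) :
    ∃ M : ℝ → ℝ, ContDiff ℝ ∞ M ∧ ∀ᶠ t in 𝓝 0, f t = f 0 + t * M t := by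
  obtain ⟨M, hM, hfM⟩ := exists_eventually_eq_add_mul (f := fun x => f x.2) (by fun_prop)
  have hline : Tendsto (fun t : ℝ => ((0 : ℝ), t)) (𝓝 0) (𝓝 0) :=
    Continuous.tendsto' (by fun_prop) _ _ rfl
  exact ⟨fun t => M (0, t), by fun_prop, hline.eventually hfM⟩

theorem exists_eventually_even_part_eq_comp_sq {f : ℝ × ℝ → ℝ} (hf : ContDiff ℝ ∞ f) :
    ∃ a : ℝ × ℝ → ℝ, ContDiff ℝ ∞ a ∧
      ∀ᶠ x in 𝓝 0, (f x + f (x.1, -x.2)) / 2 = a (x.1, x.2 ^ 2) := by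
  obtain ⟨g, hg, hsupp, hgf⟩ := exists_contDiff_hasCompactSupport_eventuallyEq (p := (0 : ℝ × ℝ))
    (.of_forall fun x => hf.contDiffAt)
  have hreflect : HasCompactSupport fun x : ℝ × ℝ => g (x.1, -x.2) :=
    hsupp.comp_homeomorph ((Homeomorph.refl ℝ).prodCongr (Homeomorph.neg ℝ))
  obtain ⟨a, ha, hga⟩ := exists_eq_comp_sq_of_hasCompactSupport
    (f := fun x => 2⁻¹ * (g x + g (x.1, -x.2))) (by fun_prop) (hsupp.add hreflect).mul_left
    fun z v => by simp [add_comm]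
  have htendsto : Tendsto (fun x : ℝ × ℝ => (x.1, -x.2)) (𝓝 0) (𝓝 0) :=
    Continuous.tendsto' (by fun_prop) _ _ (by simp)
  refine ⟨a, ha, ?_⟩
  filter_upwards [hgf, htendsto.eventually hgf] with x hx hx'
  rw [← hx, ← hx', ← hga, inv_mul_eq_div]

theorem exists_eventually_eq_even_add_odd {f : ℝ × ℝ → ℝ} (hf : ContDiff ℝ ∞ f) :
    ∃ a b : ℝ × ℝ → ℝ, ContDiff ℝ ∞ a ∧ ContDiff ℝ ∞ b ∧
      ∀ᶠ x in 𝓝 0, f x = a (x.1, x.2 ^ 2) + x.2 * b (x.1, x.2 ^ 2) := by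
  obtain ⟨M, hM, hfM⟩ := exists_eventually_eq_add_mul hf
  obtain ⟨a, ha, hfa⟩ := exists_eventually_even_part_eq_comp_sq hf
  obtain ⟨b, hb, hMb⟩ := exists_eventually_even_part_eq_comp_sq hM
  have htendsto : Tendsto (fun x : ℝ × ℝ => (x.1, -x.2)) (𝓝 0) (𝓝 0) :=
    Continuous.tendsto' (by fun_prop) _ _ (by simp)
  refine ⟨a, b, ha, hb, ?_⟩
  filter_upwards [hfM, hfa, hMb, htendsto.eventually hfM] with x hx hxa hxb hx'
  linear_combination hxa + x.2 * hxb + (hx - hx') / 2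

end SmoothGerms

section LocalDiffeo

variable {E G K : Type*} [NormedAddCommGroup E] [NormedSpace ℝ E] [NormedAddCommGroup G]
  [NormedSpace ℝ G] [NormedAddCommGroup K] [NormedSpace ℝ K]

theorem eventually_contDiffAt_localInverse [CompleteSpace E] {f : E → E} (hf : ContDiff ℝ ∞ f)
    {p : E} {e : E ≃L[ℝ] E} (he : HasFDerivAt f (e : E →L[ℝ] E) p) :
    ∀ᶠ y in 𝓝 (f p), ContDiffAt ℝ ∞ (hf.contDiffAt.localInverse he (by simp)) y := by
  let Ψ := hf.contDiffAt.toOpenPartialHomeomorph f he (by simp)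
  have hp : p ∈ Ψ.source := hf.contDiffAt.mem_toOpenPartialHomeomorph_source he (by simp)
  have hΨ : ⇑Ψ = f := hf.contDiffAt.toOpenPartialHomeomorph_coe he (by simp)
  have hfp : f p ∈ Ψ.target := hΨ ▸ Ψ.map_source hp
  have hinv : Tendsto Ψ.symm (𝓝 (f p)) (𝓝 p) := by
    have := Ψ.tendsto_symm hp
    rwa [hΨ] at this
  have hequiv : ∀ᶠ x in 𝓝 p, fderiv ℝ f x ∈ Set.range ((↑) : (E ≃L[ℝ] E) → E →L[ℝ] E) := by
    refine (hf.continuous_fderiv (by simp)).continuousAt.eventually ?_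
    rw [he.fderiv]
    exact ContinuousLinearEquiv.nhds e
  filter_upwards [hinv.eventually hequiv, Ψ.open_target.mem_nhds hfp] with y ⟨e', he'⟩ hy
  refine Ψ.contDiffAt_symm (f₀' := e') hy ?_ (hΨ ▸ hf.contDiffAt)
  rw [hΨ, he']
  exact (hf.differentiable (by simp) _).hasFDerivAt

theorem exists_contDiff_local_inverse [FiniteDimensional ℝ E] [HasContDiffBump E] {f : E → E}
    (hf : ContDiff ℝ ∞ f) {p : E} (hinj : Function.Injective (fderiv ℝ f p)) :
    ∃ g : E → E, ContDiff ℝ ∞ g ∧ (∀ᶠ x in 𝓝 p, g (f x) = x) ∧ ∀ᶠ y in 𝓝 (f p), f (g y) = y := by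
  have : CompleteSpace E := FiniteDimensional.complete ℝ E
  let e : E ≃L[ℝ] E :=
    (LinearEquiv.ofInjectiveEndo (fderiv ℝ f p : E →ₗ[ℝ] E) hinj).toContinuousLinearEquiv
  have he : HasFDerivAt f (e : E →L[ℝ] E) p := (hf.differentiable (by simp) p).hasFDerivAt
  obtain ⟨g, hg, -, hgeq⟩ :=
    exists_contDiff_hasCompactSupport_eventuallyEq (eventually_contDiffAt_localInverse hf he)
  have hstrict := hf.contDiffAt.hasStrictFDerivAt' he (by simp)
  refine ⟨g, hg, ?_, ?_⟩
  · filter_upwards [hf.continuous.continuousAt.eventually hgeq, hstrict.eventually_left_inverse]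
      with x hx hleft
    rw [hx]
    exact hleft
  · filter_upwards [hgeq, hstrict.eventually_right_inverse] with y hy hright
    rw [hy]
    exact hright

namespace IsLocalDiffeoAt

theorem of_contDiff_of_injective [FiniteDimensional ℝ E] [HasContDiffBump E] {f : E → E}
    (hf : ContDiff ℝ ∞ f) {p : E} (hinj : Function.Injective (fderiv ℝ f p)) :
    IsLocalDiffeoAt f p :=
  let ⟨g, hg, hleft, hright⟩ := exists_contDiff_local_inverse hf hinj
  ⟨hf.contDiffAt, g, hg.contDiffAt, hleft, hright⟩

theorem of_inverse {f : E → G} {g : G → E} (hf : ContDiff ℝ ∞ f) (hg : ContDiff ℝ ∞ g)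
    (hleft : ∀ x, g (f x) = x) (hright : ∀ y, f (g y) = y) (p : E) : IsLocalDiffeoAt f p :=
  ⟨hf.contDiffAt, g, hg.contDiffAt, .of_forall hleft, .of_forall hright⟩

protected theorem id (p : E) : IsLocalDiffeoAt (id : E → E) p :=
  .of_inverse contDiff_id contDiff_id (fun _ => rfl) (fun _ => rfl) p

theorem comp {g : G → K} {f : E → G} {p : E} (hg : IsLocalDiffeoAt g (f p))
    (hf : IsLocalDiffeoAt f p) : IsLocalDiffeoAt (g ∘ f) p := by
  obtain ⟨hgs, g', hg's, hgleft, hgright⟩ := hg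
  obtain ⟨hfs, f', hf's, hfleft, hfright⟩ := hf
  have hback : g' (g (f p)) = f p := hgleft.self_of_nhds
  refine ⟨hgs.comp p hfs, f' ∘ g', ContDiffAt.comp _ (hback.symm ▸ hf's) hg's, ?_, ?_⟩
  · filter_upwards [hfleft, hfs.continuousAt.eventually hgleft] with x hx hgx
    rw [Function.comp_apply, Function.comp_apply, hgx, hx]
  · have hg' : Tendsto g' (𝓝 (g (f p))) (𝓝 (f p)) := by
      have := hg's.continuousAt.tendsto
      rwa [hback] at this
    filter_upwards [hgright, hg'.eventually hfright] with y hy hfy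
    rw [Function.comp_apply, Function.comp_apply, hfy, hy]

theorem exists_inverse {f : E → G} {p : E} (hf : IsLocalDiffeoAt f p) :
    ∃ g : G → E, IsLocalDiffeoAt g (f p) ∧ g (f p) = p ∧ (∀ᶠ x in 𝓝 p, g (f x) = x) ∧
      ∀ᶠ y in 𝓝 (f p), f (g y) = y := by
  obtain ⟨hfs, g, hg, hleft, hright⟩ := hf
  have hgp : g (f p) = p := hleft.self_of_nhds
  exact ⟨g, ⟨hg, f, by rwa [hgp], hright, by rwa [hgp]⟩, hgp, hleft, hright⟩

end IsLocalDiffeoAt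

end LocalDiffeo

namespace AEquivAt

variable {f g k : ℝ × ℝ → R3} {p q r : ℝ × ℝ}

theorem trans (hfg : AEquivAt f p g q) (hgk : AEquivAt g q k r) : AEquivAt f p k r := by
  obtain ⟨φ, Φ, hφ, rfl, hΦ, hfg⟩ := hfg
  obtain ⟨ψ, Ψ, hψ, rfl, hΨ, hgk⟩ := hgk
  refine ⟨φ ∘ ψ, Ψ ∘ Φ, hφ.comp hψ, rfl, .comp (by rwa [hfg.self_of_nhds]) hΦ, ?_⟩
  filter_upwards [hgk, hψ.1.continuousAt.eventually hfg] with x hx hfx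
  rw [← hx, ← hfx]
  rfl

theorem symm (hf : ContinuousAt f p) (hfg : AEquivAt f p g q) : AEquivAt g q f p := by
  obtain ⟨φ, Φ, hφ, rfl, hΦ, hfg⟩ := hfg
  obtain ⟨ψ, hψ, hψq, -, hφψ⟩ := hφ.exists_inverse
  obtain ⟨Ψ, hΨ, -, hΨΦ, -⟩ := hΦ.exists_inverse
  refine ⟨ψ, Ψ, hψ, hψq, by rwa [← hfg.self_of_nhds], ?_⟩
  have hψ' : Tendsto ψ (𝓝 (φ q)) (𝓝 q) := by
    have := hψ.1.continuousAt.tendsto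
    rwa [hψq] at this
  filter_upwards [hφψ, hψ'.eventually hfg, hf.eventually hΨΦ] with x hx hfgx hΨx
  rw [← hfgx, hx, hΨx]

theorem of_coordinates {ψ : ℝ × ℝ → ℝ × ℝ} {Ψ : R3 → R3} (hψ : IsLocalDiffeoAt ψ p)
    (hΨ : IsLocalDiffeoAt Ψ (f p)) (h : ∀ᶠ x in 𝓝 p, Ψ (f x) = g (ψ x)) :
    AEquivAt f p g (ψ p) := by
  obtain ⟨φ, hφ, hφp, -, hψφ⟩ := hψ.exists_inverse
  have hφ' : Tendsto φ (𝓝 (ψ p)) (𝓝 p) := by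
    have := hφ.1.continuousAt.tendsto
    rwa [hφp] at this
  refine ⟨φ, Ψ, hφ, hφp, hΨ, ?_⟩
  filter_upwards [hψφ, hφ'.eventually h] with x hx hfx
  rw [hfx, hx]

theorem comp_right_iff {φ : ℝ × ℝ → ℝ × ℝ} (hφ : IsLocalDiffeoAt φ p) :
    AEquivAt (f ∘ φ) p g q ↔ AEquivAt f (φ p) g q := by
  obtain ⟨ψ, hψ, hψp, -, hφψ⟩ := hφ.exists_inverse
  refine ⟨trans ⟨φ, id, hφ, rfl, .id _, .of_forall fun _ => rfl⟩,
    trans ⟨ψ, id, hψ, hψp, .id _, hφψ.mono fun x hx => ?_⟩⟩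
  simp only [Function.comp_apply, id, hx]

end AEquivAt

section SecondDerivative

variable {E G K : Type*} [NormedAddCommGroup E] [NormedSpace ℝ E] [NormedAddCommGroup G]
  [NormedSpace ℝ G] [NormedAddCommGroup K] [NormedSpace ℝ K]

theorem differentiable_fderiv_of_contDiff_two {f : E → G} (hf : ContDiff ℝ 2 f) :
    Differentiable ℝ (fderiv ℝ f) :=
  (hf.fderiv_right (m := 1) (by norm_num)).differentiable one_ne_zero

theorem fderiv_fderiv_comp_apply {f : G → K} {g : E → G} (hf : ContDiff ℝ 2 f)
    (hg : ContDiff ℝ 2 g) (x v w : E) :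
    fderiv ℝ (fderiv ℝ (f ∘ g)) x v w =
      fderiv ℝ (fderiv ℝ f) (g x) (fderiv ℝ g x v) (fderiv ℝ g x w) +
        fderiv ℝ f (g x) (fderiv ℝ (fderiv ℝ g) x v w) := by
  have hf' := differentiable_fderiv_of_contDiff_two hf
  have hg' := differentiable_fderiv_of_contDiff_two hg
  have hfd := hf.differentiable (by simp)
  have hgd := hg.differentiable (by simp)
  have hchain : fderiv ℝ (f ∘ g) = fun y => (fderiv ℝ f (g y)).comp (fderiv ℝ g y) :=
    funext fun y => fderiv_comp y (hfd _) (hgd y)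
  have houter : fderiv ℝ (fun y => fderiv ℝ f (g y)) x =
      (fderiv ℝ (fderiv ℝ f) (g x)).comp (fderiv ℝ g x) := fderiv_comp x (hf' _) (hgd x)
  rw [hchain, fderiv_clm_comp (c := fun y => fderiv ℝ f (g y)) ((hf' _).comp x (hgd x)) (hg' x),
    houter]
  simp [add_comm]

theorem fderiv_fderiv_apply_const {f : E → G} (hf : ContDiff ℝ 2 f) (x v w : E) :
    fderiv ℝ (fun y => fderiv ℝ f y w) x v = fderiv ℝ (fderiv ℝ f) x v w := by
  rw [fderiv_clm_apply (differentiable_fderiv_of_contDiff_two hf x) (by fun_prop)]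
  simp

theorem fderiv_fderiv_comm {f : E → G} (hf : ContDiff ℝ 2 f) (x v w : E) :
    fderiv ℝ (fderiv ℝ f) x v w = fderiv ℝ (fderiv ℝ f) x w v :=
  hf.contDiffAt.isSymmSndFDerivAt (by simp) v w

end SecondDerivative

section PartialDerivatives

variable {V : Type*} [NormedAddCommGroup V] [NormedSpace ℝ V] {f g : ℝ × ℝ → V}

theorem fderiv_apply_eq_pu_add_pw (f : ℝ × ℝ → V) (x v : ℝ × ℝ) :
    fderiv ℝ f x v = v.1 • pu f x + v.2 • pw f x := by
  rw [pu, pw, ← map_smul, ← map_smul, ← map_add]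
  simp

theorem pu_comp {φ : ℝ × ℝ → ℝ × ℝ} (hf : Differentiable ℝ f) (hφ : Differentiable ℝ φ)
    (x : ℝ × ℝ) : pu (f ∘ φ) x = (pu φ x).1 • pu f (φ x) + (pu φ x).2 • pw f (φ x) := by
  rw [pu, fderiv_comp x (hf _) (hφ x), ContinuousLinearMap.comp_apply, fderiv_apply_eq_pu_add_pw f]
  rfl

theorem pw_comp {φ : ℝ × ℝ → ℝ × ℝ} (hf : Differentiable ℝ f) (hφ : Differentiable ℝ φ)
    (x : ℝ × ℝ) : pw (f ∘ φ) x = (pw φ x).1 • pu f (φ x) + (pw φ x).2 • pw f (φ x) := by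
  rw [pw, fderiv_comp x (hf _) (hφ x), ContinuousLinearMap.comp_apply, fderiv_apply_eq_pu_add_pw f]
  rfl

theorem pu_prodMk {f g : ℝ × ℝ → ℝ} (hf : Differentiable ℝ f) (hg : Differentiable ℝ g)
    (x : ℝ × ℝ) : pu (fun y => (f y, g y)) x = (pu f x, pu g x) := by
  rw [pu, (hf x).fderiv_prodMk (hg x)]
  rfl

theorem pw_prodMk {f g : ℝ × ℝ → ℝ} (hf : Differentiable ℝ f) (hg : Differentiable ℝ g)
    (x : ℝ × ℝ) : pw (fun y => (f y, g y)) x = (pw f x, pw g x) := by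
  rw [pw, (hf x).fderiv_prodMk (hg x)]
  rfl

theorem pw_mul {f g : ℝ × ℝ → ℝ} (hf : Differentiable ℝ f) (hg : Differentiable ℝ g) (x : ℝ × ℝ) :
    pw (fun y => f y * g y) x = f x * pw g x + pw f x * g x := by
  rw [pw, fderiv_fun_mul (hf x) (hg x)]
  simp [pw, mul_comm]

theorem pw_pw_eq (hf : ContDiff ℝ 2 f) (x : ℝ × ℝ) :
    pw (pw f) x = fderiv ℝ (fderiv ℝ f) x (0, 1) (0, 1) :=
  fderiv_fderiv_apply_const hf x _ _

theorem pu_pw_eq (hf : ContDiff ℝ 2 f) (x : ℝ × ℝ) :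
    pu (pw f) x = fderiv ℝ (fderiv ℝ f) x (1, 0) (0, 1) :=
  fderiv_fderiv_apply_const hf x _ _

theorem pu_congr {p : ℝ × ℝ} (h : f =ᶠ[𝓝 p] g) : pu f =ᶠ[𝓝 p] pu g :=
  h.fderiv.mono fun x hx => by rw [pu, hx, pu]

theorem pw_congr {p : ℝ × ℝ} (h : f =ᶠ[𝓝 p] g) : pw f =ᶠ[𝓝 p] pw g :=
  h.fderiv.mono fun x hx => by rw [pw, hx, pw]

theorem contDiff_pu {m n : WithTop ℕ∞} (hf : ContDiff ℝ n f) (hmn : m + 1 ≤ n) :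
    ContDiff ℝ m (pu f) :=
  (hf.fderiv_right hmn).clm_apply contDiff_const

theorem contDiff_pw {m n : WithTop ℕ∞} (hf : ContDiff ℝ n f) (hmn : m + 1 ≤ n) :
    ContDiff ℝ m (pw f) :=
  (hf.fderiv_right hmn).clm_apply contDiff_const

/-- The Jacobian determinant of a map of the plane. -/
def planeJacobian (φ : ℝ × ℝ → ℝ × ℝ) (x : ℝ × ℝ) : ℝ :=
  (pu φ x).1 * (pw φ x).2 - (pu φ x).2 * (pw φ x).1

theorem injective_fderiv_iff_planeJacobian_ne_zero {φ : ℝ × ℝ → ℝ × ℝ} {p : ℝ × ℝ} :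
    Function.Injective (fderiv ℝ φ p) ↔ planeJacobian φ p ≠ 0 := by
  rw [injective_iff_map_eq_zero]
  simp only [fderiv_apply_eq_pu_add_pw, planeJacobian, Prod.ext_iff, Prod.fst_add, Prod.snd_add,
    Prod.smul_fst, Prod.smul_snd, smul_eq_mul, Prod.fst_zero, Prod.snd_zero, Prod.forall]
  generalize pu φ p = a, pw φ p = b
  refine ⟨fun h hJ => ?_, fun hJ s t ⟨h₁, h₂⟩ => ⟨?_, ?_⟩⟩
  · have h₁ := h b.2 (-a.2) ⟨by linarith, by ring⟩
    have h₂ := h b.1 (-a.1) ⟨by ring, by linarith⟩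
    have := h 1 0 ⟨by linarith, by linarith⟩
    exact one_ne_zero this.1
  · exact (mul_eq_zero_iff_right hJ).1 (by linear_combination b.2 * h₁ - b.1 * h₂)
  · exact (mul_eq_zero_iff_right hJ).1 (by linear_combination a.1 * h₂ - a.2 * h₁)

end PartialDerivatives

section Det3

theorem det3_eq (a b c : R3) :
    det3 a b c = a 0 * (b 1 * c 2 - b 2 * c 1) - a 1 * (b 0 * c 2 - b 2 * c 0) +
      a 2 * (b 0 * c 1 - b 1 * c 0) := by
  simp only [det3, Matrix.det_fin_three, Matrix.of_apply, Matrix.cons_val]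
  ring

theorem linearIndependent_of_det3_ne_zero {a b c : R3} (h : det3 a b c ≠ 0) :
    LinearIndependent ℝ ![a, b, c] :=
  Matrix.linearIndependent_rows_of_det_ne_zero h

theorem det3_map (T : R3 →L[ℝ] R3) (a b c : R3) :
    det3 (T a) (T b) (T c) = T.det * det3 a b c := by
  have hrows : Matrix.of ![T a, T b, T c] =
      Matrix.of ![a, b, c] * (LinearMap.toMatrix' (T : R3 →ₗ[ℝ] R3)).transpose := by
    ext i j
    have happly (v : R3) : T v j = ∑ k, v k * LinearMap.toMatrix' (T : R3 →ₗ[ℝ] R3) j k := by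
      rw [← ContinuousLinearMap.coe_coe, ← LinearMap.toMatrix'_mulVec]
      exact dotProduct_comm _ _
    fin_cases i <;> exact happly _
  rw [det3, hrows, Matrix.det_mul, Matrix.det_transpose, LinearMap.det_toMatrix', mul_comm, det3,
    ContinuousLinearMap.det]

theorem det_ne_zero_of_injective {T : R3 →L[ℝ] R3} (hT : Function.Injective T) : T.det ≠ 0 :=
  (LinearEquiv.isUnit_det' (LinearEquiv.ofInjectiveEndo (T : R3 →ₗ[ℝ] R3) hT)).ne_zero

theorem isBigO_det3 {α : Type*} {l : Filter α} {f g h : α → R3} {a b c : α → ℝ} (hf : f =O[l] a)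
    (hg : g =O[l] b) (hh : h =O[l] c) :
    (fun x => det3 (f x) (g x) (h x)) =O[l] fun x => a x * (b x * c x) := by
  simp only [Asymptotics.isBigO_pi] at hf hg hh
  simp only [det3_eq]
  exact (((hf 0).mul (((hg 1).mul (hh 2)).sub ((hg 2).mul (hh 1)))).sub
    ((hf 1).mul (((hg 0).mul (hh 2)).sub ((hg 2).mul (hh 0))))).add
    ((hf 2).mul (((hg 0).mul (hh 1)).sub ((hg 1).mul (hh 0))))

theorem isBigO_clm_apply {α E G : Type*} [NormedAddCommGroup E] [NormedSpace ℝ E]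
    [NormedAddCommGroup G] [NormedSpace ℝ G] {l : Filter α} {c : α → E →L[ℝ] G} {u : α → E}
    {a b : α → ℝ} (hc : c =O[l] a) (hu : u =O[l] b) :
    (fun x => c x (u x)) =O[l] fun x => a x * b x :=
  (Asymptotics.IsBigO.of_norm_le fun x => (c x).le_opNorm (u x)).trans
    (hc.norm_left.mul hu.norm_left)

theorem contDiff_det3 {E : Type*} [NormedAddCommGroup E] [NormedSpace ℝ E] {n : WithTop ℕ∞}
    {f g h : E → R3} (hf : ContDiff ℝ n f) (hg : ContDiff ℝ n g) (hh : ContDiff ℝ n h) :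
    ContDiff ℝ n fun x => det3 (f x) (g x) (h x) := by
  rw [contDiff_pi] at hf hg hh
  simp only [det3_eq]
  fun_prop

theorem fderiv_det3_apply_of_eq_zero {E : Type*} [NormedAddCommGroup E] [NormedSpace ℝ E]
    {f g h : E → R3} {p : E} (hf : DifferentiableAt ℝ f p) (hg : DifferentiableAt ℝ g p)
    (hh : DifferentiableAt ℝ h p) (hgp : g p = 0) (v : E) :
    fderiv ℝ (fun x => det3 (f x) (g x) (h x)) p v = det3 (f p) (fderiv ℝ g p v) (h p) := by
  have hf' := hasFDerivAt_pi'.1 hf.hasFDerivAt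
  have hg' := hasFDerivAt_pi'.1 hg.hasFDerivAt
  have hh' := hasFDerivAt_pi'.1 hh.hasFDerivAt
  have hderiv := (((hf' 0).mul (((hg' 1).mul (hh' 2)).sub ((hg' 2).mul (hh' 1)))).sub
    ((hf' 1).mul (((hg' 0).mul (hh' 2)).sub ((hg' 2).mul (hh' 0))))).add
    ((hf' 2).mul (((hg' 0).mul (hh' 1)).sub ((hg' 1).mul (hh' 0))))
  rw [(hderiv.congr_of_eventuallyEq (.of_forall fun x => det3_eq _ _ _)).fderiv, det3_eq]
  simp [hgp, mul_comm]

end Det3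

section QuadraticPart

open Asymptotics

variable {f g : ℝ × ℝ → ℝ} {A B C A' B' C' : ℝ}

/-- The germ of `f` at `0` agrees with the quadratic form `A u² + B u w + C w²` up to `o(‖x‖²)`. -/
def HasQuadraticPart (f : ℝ × ℝ → ℝ) (A B C : ℝ) : Prop :=
  (fun x => f x - (A * x.1 ^ 2 + B * (x.1 * x.2) + C * x.2 ^ 2)) =o[𝓝 0] fun x => ‖x‖ ^ 2

theorem isLittleO_norm_zero {V : Type*} [NormedAddCommGroup V] [NormedSpace ℝ V] {f : ℝ × ℝ → V}
    (hf : HasFDerivAt f (0 : ℝ × ℝ →L[ℝ] V) 0) (h0 : f 0 = 0) : f =o[𝓝 0] fun x => ‖x‖ := by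
  simpa [h0] using hf.isLittleO.norm_right

theorem isBigO_norm_of_differentiableAt {V : Type*} [NormedAddCommGroup V] [NormedSpace ℝ V]
    {f : ℝ × ℝ → V} (hf : DifferentiableAt ℝ f 0) (h0 : f 0 = 0) :
    f =O[𝓝 0] fun x => ‖x‖ := by
  simpa [h0] using hf.isBigO_sub.norm_right

theorem isBigO_fst_norm : (fun x : ℝ × ℝ => x.1) =O[𝓝 0] fun x => ‖x‖ :=
  isBigO_norm_of_differentiableAt (by fun_prop) rfl

theorem isBigO_snd_norm : (fun x : ℝ × ℝ => x.2) =O[𝓝 0] fun x => ‖x‖ :=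
  isBigO_norm_of_differentiableAt (by fun_prop) rfl

namespace HasQuadraticPart

theorem congr (hf : HasQuadraticPart f A B C) (h : f =ᶠ[𝓝 0] g) : HasQuadraticPart g A B C :=
  IsLittleO.congr' hf (h.mono fun x hx => by simp only [hx]) .rfl

theorem of_isLittleO (hf : f =o[𝓝 0] fun x => ‖x‖ ^ 2) : HasQuadraticPart f 0 0 0 := by
  simpa [HasQuadraticPart] using hf

theorem isBigO (hf : HasQuadraticPart f A B C) : f =O[𝓝 0] fun x => ‖x‖ ^ 2 := by
  have hmixed : (fun x : ℝ × ℝ => x.1 * x.2) =O[𝓝 0] fun x => ‖x‖ ^ 2 :=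
    (isBigO_fst_norm.mul isBigO_snd_norm).congr_right fun x => (sq _).symm
  have hform : (fun x : ℝ × ℝ => A * x.1 ^ 2 + B * (x.1 * x.2) + C * x.2 ^ 2) =O[𝓝 0]
      fun x => ‖x‖ ^ 2 :=
    (((isBigO_fst_norm.pow 2).const_mul_left A).add (hmixed.const_mul_left B)).add
      ((isBigO_snd_norm.pow 2).const_mul_left C)
  exact (IsLittleO.isBigO hf |>.add hform).congr_left fun x => sub_add_cancel _ _

theorem add (hf : HasQuadraticPart f A B C) (hg : HasQuadraticPart g A' B' C') :
    HasQuadraticPart (fun x => f x + g x) (A + A') (B + B') (C + C') :=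
  (IsLittleO.add hf hg).congr_left fun x => by ring

theorem mul_continuousAt (hf : HasQuadraticPart f A B C) {c : ℝ × ℝ → ℝ} (hc : ContinuousAt c 0) :
    HasQuadraticPart (fun x => c x * f x) (c 0 * A) (c 0 * B) (c 0 * C) := by
  have hc' : (fun x => c x - c 0) =o[𝓝 0] fun _ => (1 : ℝ) :=
    (isLittleO_one_iff ℝ).2 (tendsto_sub_nhds_zero_iff.2 hc)
  have hvar := hc'.mul_isBigO hf.isBigO
  simp only [one_mul] at hvar
  exact (hvar.add (IsLittleO.const_mul_left hf (c 0))).congr_left fun x => by ring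

theorem const_mul (hf : HasQuadraticPart f A B C) (c : ℝ) :
    HasQuadraticPart (fun x => c * f x) (c * A) (c * B) (c * C) :=
  hf.mul_continuousAt continuousAt_const

theorem mul_of_differentiableAt (hf : DifferentiableAt ℝ f 0) (hg : DifferentiableAt ℝ g 0)
    (hf0 : f 0 = 0) (hg0 : g 0 = 0) :
    HasQuadraticPart (fun x => f x * g x) (pu f 0 * pu g 0) (pu f 0 * pw g 0 + pw f 0 * pu g 0)
      (pw f 0 * pw g 0) := by
  have hlin {k : ℝ × ℝ → ℝ} (hk : DifferentiableAt ℝ k 0) (hk0 : k 0 = 0) :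
      (fun x => k x - (x.1 * pu k 0 + x.2 * pw k 0)) =o[𝓝 0] fun x => ‖x‖ := by
    simpa [hk0, fderiv_apply_eq_pu_add_pw] using hk.hasFDerivAt.isLittleO.norm_right
  have hlinO : (fun x : ℝ × ℝ => x.1 * pu g 0 + x.2 * pw g 0) =O[𝓝 0] fun x => ‖x‖ :=
    isBigO_norm_of_differentiableAt (by fun_prop) (by simp)
  have hprod := ((isBigO_norm_of_differentiableAt hf hf0).mul_isLittleO (hlin hg hg0)).add
    ((hlin hf hf0).mul_isBigO hlinO)
  exact hprod.congr (fun x => by ring) fun x => (sq _).symm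

theorem comp (hf : HasQuadraticPart f A B C) {φ : ℝ × ℝ → ℝ × ℝ} (hφ : DifferentiableAt ℝ φ 0)
    (h0 : φ 0 = 0) :
    HasQuadraticPart (f ∘ φ)
      (A * (pu φ 0).1 ^ 2 + B * ((pu φ 0).1 * (pu φ 0).2) + C * (pu φ 0).2 ^ 2)
      (2 * A * ((pu φ 0).1 * (pw φ 0).1) + B * ((pu φ 0).1 * (pw φ 0).2 + (pw φ 0).1 * (pu φ 0).2)
        + 2 * C * ((pu φ 0).2 * (pw φ 0).2))
      (A * (pw φ 0).1 ^ 2 + B * ((pw φ 0).1 * (pw φ 0).2) + C * (pw φ 0).2 ^ 2) := by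
  have hφ₁ : fderiv ℝ (fun x => (φ x).1) 0 = _ := hφ.hasFDerivAt.fst.fderiv
  have hφ₂ : fderiv ℝ (fun x => (φ x).2) 0 = _ := hφ.hasFDerivAt.snd.fderiv
  have h₁ : (φ 0).1 = 0 := by rw [h0]; rfl
  have h₂ : (φ 0).2 = 0 := by rw [h0]; rfl
  have hlim : Tendsto φ (𝓝 0) (𝓝 0) := by simpa [h0] using hφ.continuousAt.tendsto
  have herror := (IsLittleO.comp_tendsto hf hlim).trans_isBigO
    ((isBigO_norm_of_differentiableAt hφ h0).norm_left.pow 2)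
  have hform := (((mul_of_differentiableAt hφ.fst hφ.fst h₁ h₁).const_mul A).add
    ((mul_of_differentiableAt hφ.fst hφ.snd h₁ h₂).const_mul B)).add
    ((mul_of_differentiableAt hφ.snd hφ.snd h₂ h₂).const_mul C)
  have hsum := (of_isLittleO herror).add hform
  simp only [pu, pw, hφ₁, hφ₂] at hsum ⊢
  convert hsum using 1
  · funext x
    simp only [Function.comp_apply]
    ring
  all_goals
    simp only [ContinuousLinearMap.comp_apply, ContinuousLinearMap.coe_fst',
      ContinuousLinearMap.coe_snd', zero_add]
    ring

theorem unique (hf : HasQuadraticPart f A B C) (hf' : HasQuadraticPart f A' B' C') :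
    A = A' ∧ B = B' ∧ C = C' := by
  have hdiff := IsLittleO.sub hf' hf
  have hline (v : ℝ × ℝ) :
      (A - A') * v.1 ^ 2 + (B - B') * (v.1 * v.2) + (C - C') * v.2 ^ 2 = 0 := by
    by_contra hne
    have hray : Tendsto (fun t : ℝ => t • v) (𝓝[≠] 0) (𝓝 0) :=
      (Continuous.tendsto' (f := fun t : ℝ => t • v) (by fun_prop) 0 0 (zero_smul ℝ v)).mono_left
        nhdsWithin_le_nhds
    have hsq : (fun t : ℝ =>
        ((A - A') * v.1 ^ 2 + (B - B') * (v.1 * v.2) + (C - C') * v.2 ^ 2) * t ^ 2) =o[𝓝[≠] 0]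
        fun t => ‖v‖ ^ 2 * t ^ 2 := by
      refine (hdiff.comp_tendsto hray).congr (fun t => ?_) fun t => ?_
      · simp only [Function.comp_apply, Prod.smul_fst, Prod.smul_snd, smul_eq_mul]
        ring
      · simp [norm_smul, mul_pow, mul_comm]
    have hself : (fun t : ℝ => t ^ 2) =o[𝓝[≠] 0] fun t => t ^ 2 :=
      ((isLittleO_const_mul_left_iff hne).1 hsq).trans_isBigO (isBigO_const_mul_self _ _ _)
    have hne_zero : ∀ᶠ t : ℝ in 𝓝[≠] 0, ‖t ^ 2‖ ≠ 0 :=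
      eventually_mem_nhdsWithin.mono fun t ht => norm_ne_zero_iff.2 (pow_ne_zero 2 ht)
    exact isLittleO_irrefl' hne_zero.frequently hself
  have h₁ := hline (1, 0)
  have h₂ := hline (0, 1)
  have h₃ := hline (1, 1)
  simp only [one_pow, mul_one, mul_zero, add_zero, zero_pow two_ne_zero, zero_add] at h₁ h₂ h₃
  exact ⟨by linarith, by linarith, by linarith⟩

end HasQuadraticPart

end QuadraticPart

section KernelInvariants

open Asymptotics

/-- The second fundamental form of a surface patch, without its normalizing factor: the component
of the second derivative along the normal `F_u × F_w`. -/
def secondForm (F : ℝ × ℝ → R3) (x v w : ℝ × ℝ) : ℝ :=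
  det3 (pu F x) (pw F x) (fderiv ℝ (fderiv ℝ F) x v w)

/-- The value of the second fundamental form on `∂_w`. Its quadratic part at `0` separates the
singularities `S₁⁺` and `S₁⁻`. -/
def kernelForm (F : ℝ × ℝ → R3) (x : ℝ × ℝ) : ℝ :=
  det3 (pu F x) (pw F x) (pw (pw F) x)

/-- Whitney's determinant `det (F_u, F_uw, F_ww)` at `0`, whose vanishing excludes a cross cap. -/
def whitneyDet (F : ℝ × ℝ → R3) : ℝ :=
  det3 (pu F 0) (pu (pw F) 0) (pw (pw F) 0)

/-- A map which has corank one at `0`, with kernel spanned by `∂_w`. -/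
structure IsKernelNormalized (F : ℝ × ℝ → R3) : Prop where
  contDiff : ContDiff ℝ 3 F
  pu_ne_zero : pu F 0 ≠ 0
  pw_eq_zero : pw F 0 = 0

variable {F : ℝ × ℝ → R3} {φ : ℝ × ℝ → ℝ × ℝ} {Φ : R3 → R3}

theorem kernelForm_eq_secondForm (hF : ContDiff ℝ 2 F) (x : ℝ × ℝ) :
    kernelForm F x = secondForm F x (0, 1) (0, 1) := by
  rw [kernelForm, pw_pw_eq hF, secondForm]

theorem secondForm_comp_right (hF : ContDiff ℝ 2 F) (hφ : ContDiff ℝ 2 φ) (x v w : ℝ × ℝ) :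
    secondForm (F ∘ φ) x v w =
      planeJacobian φ x * secondForm F (φ x) (fderiv ℝ φ x v) (fderiv ℝ φ x w) := by
  have hFd := hF.differentiable two_ne_zero
  have hφd := hφ.differentiable two_ne_zero
  rw [secondForm, pu_comp hFd hφd, pw_comp hFd hφd, fderiv_fderiv_comp_apply hF hφ,
    fderiv_apply_eq_pu_add_pw F, secondForm, planeJacobian]
  simp only [det3_eq, Pi.add_apply, Pi.smul_apply, smul_eq_mul]
  ring

theorem secondForm_comp_left (hΦ : ContDiff ℝ 2 Φ) (hF : ContDiff ℝ 2 F) (x v w : ℝ × ℝ) :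
    secondForm (Φ ∘ F) x v w =
      (fderiv ℝ Φ (F x)).det * secondForm F x v w +
        det3 (fderiv ℝ Φ (F x) (pu F x)) (fderiv ℝ Φ (F x) (pw F x))
          (fderiv ℝ (fderiv ℝ Φ) (F x) (fderiv ℝ F x v) (fderiv ℝ F x w)) := by
  have hpartial (e : ℝ × ℝ) : fderiv ℝ (Φ ∘ F) x e = fderiv ℝ Φ (F x) (fderiv ℝ F x e) := by
    rw [fderiv_comp x (hΦ.differentiable two_ne_zero _) (hF.differentiable two_ne_zero x)]
    rfl
  rw [secondForm, secondForm, ← det3_map, pu, pw, hpartial, hpartial,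
    fderiv_fderiv_comp_apply hΦ hF, pu, pw]
  simp only [det3_eq, Pi.add_apply]
  ring

theorem secondForm_combination (hF : ContDiff ℝ 2 F) (x v : ℝ × ℝ) :
    secondForm F x v v = v.1 ^ 2 * secondForm F x (1, 0) (1, 0) +
      2 * v.1 * v.2 * secondForm F x (1, 0) (0, 1) + v.2 ^ 2 * kernelForm F x := by
  obtain ⟨s, t⟩ := v
  have hv : ((s, t) : ℝ × ℝ) = s • (1, 0) + t • (0, 1) := by simp
  rw [kernelForm_eq_secondForm hF]
  simp only [secondForm, hv, map_add, map_smul, _root_.add_apply,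
    _root_.smul_apply, fderiv_fderiv_comm hF x (0, 1) (1, 0), det3_eq, Pi.add_apply,
    Pi.smul_apply, smul_eq_mul]
  ring

theorem contDiff_secondForm (hF : ContDiff ℝ 3 F) (v w : ℝ × ℝ) :
    ContDiff ℝ 1 fun x => secondForm F x v w := by
  have hF' : ContDiff ℝ 2 (fderiv ℝ F) := hF.fderiv_right (by norm_num)
  have hF'' : ContDiff ℝ 1 (fderiv ℝ (fderiv ℝ F)) := hF'.fderiv_right (by norm_num)
  exact contDiff_det3 (contDiff_pu hF (by norm_num)) (contDiff_pw hF (by norm_num))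
    ((hF''.clm_apply contDiff_const).clm_apply contDiff_const)

namespace IsKernelNormalized

theorem secondForm_zero (hF : IsKernelNormalized F) (v w : ℝ × ℝ) : secondForm F 0 v w = 0 := by
  simp [secondForm, hF.pw_eq_zero, det3_eq]

theorem fderiv_secondForm (hF : IsKernelNormalized F) (v w z : ℝ × ℝ) :
    fderiv ℝ (fun x => secondForm F x v w) 0 z =
      det3 (pu F 0) (fderiv ℝ (fderiv ℝ F) 0 z (0, 1)) (fderiv ℝ (fderiv ℝ F) 0 v w) := by
  have hF₂ : ContDiff ℝ 2 F := hF.contDiff.of_le (by norm_num)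
  have hF' : ContDiff ℝ 2 (fderiv ℝ F) := hF.contDiff.fderiv_right (by norm_num)
  have hF'' : Differentiable ℝ (fderiv ℝ (fderiv ℝ F)) := differentiable_fderiv_of_contDiff_two hF'
  have hpu := (contDiff_pu hF.contDiff (m := 2) (by norm_num)).differentiable two_ne_zero
  have hpw := (contDiff_pw hF.contDiff (m := 2) (by norm_num)).differentiable two_ne_zero
  rw [← fderiv_fderiv_apply_const hF₂]
  exact fderiv_det3_apply_of_eq_zero (hpu 0) (hpw 0)
    ((hF''.clm_apply (differentiable_const v)).clm_apply (differentiable_const w) 0) hF.pw_eq_zero z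

theorem whitneyDet_eq_zero_of_hasQuadraticPart (hF : IsKernelNormalized F) {A B C : ℝ}
    (h : HasQuadraticPart (kernelForm F) A B C) : whitneyDet F = 0 := by
  have hF₂ : ContDiff ℝ 2 F := hF.contDiff.of_le (by norm_num)
  rw [funext (kernelForm_eq_secondForm hF₂)] at h
  have hzero : HasFDerivAt (fun x => secondForm F x (0, 1) (0, 1)) (0 : ℝ × ℝ →L[ℝ] ℝ) 0 :=
    IsBigO.hasFDerivAt (n := 2) (by simpa using h.isBigO) one_lt_two
  have := hF.fderiv_secondForm (0, 1) (0, 1) (1, 0)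
  rw [hzero.fderiv, ← pu_pw_eq hF₂, ← pw_pw_eq hF₂] at this
  exact this.symm

theorem isLittleO_secondForm_mixed (hF : IsKernelNormalized F) (hD : whitneyDet F = 0) :
    (fun x => secondForm F x (1, 0) (0, 1)) =o[𝓝 0] fun x => ‖x‖ := by
  have hF₂ : ContDiff ℝ 2 F := hF.contDiff.of_le (by norm_num)
  refine isLittleO_norm_zero (.congr_fderiv ((contDiff_secondForm hF.contDiff _ _).differentiable
    one_ne_zero 0).hasFDerivAt ?_) (hF.secondForm_zero _ _)
  ext
  · simp only [ContinuousLinearMap.comp_apply, ContinuousLinearMap.inl_apply, hF.fderiv_secondForm,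
      det3_eq, ContinuousLinearMap.zero_comp, zero_apply]
    ring
  · rw [whitneyDet, pu_pw_eq hF₂, pw_pw_eq hF₂, det3_eq] at hD
    simp only [ContinuousLinearMap.comp_apply, ContinuousLinearMap.inr_apply, hF.fderiv_secondForm,
      det3_eq, ContinuousLinearMap.zero_comp, zero_apply]
    linear_combination -hD

theorem exists_hasQuadraticPart_comp_left (hF : IsKernelNormalized F) (hΦ : ContDiff ℝ 2 Φ)
    (hinj : Function.Injective (fderiv ℝ Φ (F 0))) {A B C : ℝ}
    (h : HasQuadraticPart (kernelForm F) A B C) :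
    ∃ d ≠ 0, HasQuadraticPart (kernelForm (Φ ∘ F)) (d * A) (d * B) (d * C) := by
  have hF₂ : ContDiff ℝ 2 F := hF.contDiff.of_le (by norm_num)
  have hΦ' : Continuous fun x => fderiv ℝ Φ (F x) :=
    (hΦ.continuous_fderiv two_ne_zero).comp hF₂.continuous
  have hΦ'' : Continuous fun x => fderiv ℝ (fderiv ℝ Φ) (F x) :=
    ((hΦ.fderiv_right (m := 1) (by norm_num)).continuous_fderiv one_ne_zero).comp hF₂.continuous
  have hpu : Continuous (pu F) := (contDiff_pu hF₂ (m := 1) (by norm_num)).continuous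
  have hpw := contDiff_pw hF₂ (m := 1) (by norm_num)
  have hkernel : (pw F) =O[𝓝 0] fun x => ‖x‖ :=
    isBigO_norm_of_differentiableAt (hpw.differentiable one_ne_zero 0) hF.pw_eq_zero
  have hdet : Continuous fun x => (fderiv ℝ Φ (F x)).det :=
    ContinuousLinearMap.continuous_det.comp hΦ'
  have hone {V : Type} [NormedAddCommGroup V] {k : ℝ × ℝ → V} (hk : Continuous k) :
      k =O[𝓝 0] fun _ => (1 : ℝ) := hk.continuousAt.isBigO_one ℝ
  have hcubic := isBigO_det3 (isBigO_clm_apply (hone hΦ') (hone hpu))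
    (isBigO_clm_apply (hone hΦ') hkernel)
    (isBigO_clm_apply (isBigO_clm_apply (hone hΦ'') hkernel) hkernel)
  have herror := (hcubic.congr_right (g₂ := fun x => ‖x‖ ^ 3) fun x => by ring).trans_isLittleO
    ((isLittleO_pow_pow (by norm_num : 2 < 3)).comp_tendsto tendsto_norm_zero)
  refine ⟨_, det_ne_zero_of_injective hinj, ?_⟩
  have hsum := (h.mul_continuousAt hdet.continuousAt).add (.of_isLittleO herror)
  simp only [add_zero] at hsum
  refine hsum.congr (.of_forall fun x => ?_)
  rw [kernelForm_eq_secondForm (hΦ.comp hF₂), secondForm_comp_left hΦ hF₂,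
    ← kernelForm_eq_secondForm hF₂]
  rfl

theorem isLittleO_secondForm_pw_sub (hF : IsKernelNormalized F) (hD : whitneyDet F = 0)
    (hφ : ContDiff ℝ 2 φ) (h0 : φ 0 = 0) (hker : (pw φ 0).1 = 0) :
    (fun x => secondForm F (φ x) (pw φ x) (pw φ x) - (pw φ x).2 ^ 2 * kernelForm F (φ x)) =o[𝓝 0]
      fun x => ‖x‖ ^ 2 := by
  have hφd : Differentiable ℝ φ := hφ.differentiable two_ne_zero
  have hpw := contDiff_pw hφ (m := 1) (by norm_num)
  have hα : (fun x => (pw φ x).1) =O[𝓝 0] fun x => ‖x‖ :=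
    isBigO_norm_of_differentiableAt (hpw.differentiable one_ne_zero 0).fst hker
  have hβ : (fun x => (pw φ x).2) =O[𝓝 0] fun _ => (1 : ℝ) :=
    hpw.continuous.snd.continuousAt.isBigO_one ℝ
  have hφ0 : Tendsto φ (𝓝 0) (𝓝 0) := by simpa only [h0] using hφd.continuous.tendsto 0
  have hmixed := ((hF.isLittleO_secondForm_mixed hD).comp_tendsto hφ0).trans_isBigO
    (isBigO_norm_of_differentiableAt (hφd 0) h0).norm_left
  have hdiag : (fun x => secondForm F (φ x) (1, 0) (1, 0)) =o[𝓝 0] fun _ => (1 : ℝ) := by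
    have hcont := (contDiff_secondForm hF.contDiff (1, 0) (1, 0)).continuous.comp hφd.continuous
    exact (isLittleO_one_iff ℝ).2 (hcont.tendsto' 0 0 (by simp [h0, hF.secondForm_zero]))
  have hsum := (((hα.pow 2).mul_isLittleO hdiag).congr_right fun x => mul_one _).add
    (((hβ.mul_isLittleO (hα.mul_isLittleO hmixed)).congr_right
      (g₂ := fun x => ‖x‖ ^ 2) fun x => by ring).const_mul_left 2)
  refine hsum.congr_left fun x => ?_
  rw [secondForm_combination (hF.contDiff.of_le (by norm_num)) _ (pw φ x)]
  simp only [Function.comp_apply]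
  ring

theorem exists_hasQuadraticPart_comp_right (hF : IsKernelNormalized F) (hφ : ContDiff ℝ 2 φ)
    (h0 : φ 0 = 0) (hker : (pw φ 0).1 = 0) (hJ : planeJacobian φ 0 ≠ 0) {A B C : ℝ}
    (h : HasQuadraticPart (kernelForm F) A B C) :
    ∃ A' B' C', HasQuadraticPart (kernelForm (F ∘ φ)) A' B' C' ∧
      ∃ k ≠ 0, B' ^ 2 - 4 * A' * C' = k ^ 2 * (B ^ 2 - 4 * A * C) := by
  have hF₂ : ContDiff ℝ 2 F := hF.contDiff.of_le (by norm_num)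
  have hpu : Continuous (pu φ) := (contDiff_pu hφ (m := 1) (by norm_num)).continuous
  have hpw : Continuous (pw φ) := (contDiff_pw hφ (m := 1) (by norm_num)).continuous
  have herror := hF.isLittleO_secondForm_pw_sub (hF.whitneyDet_eq_zero_of_hasQuadraticPart h)
    hφ h0 hker
  have hβ : Continuous fun x => (pw φ x).2 ^ 2 := by fun_prop
  have hJc : Continuous (planeJacobian φ) := by unfold planeJacobian; fun_prop
  have hpull := (h.comp (hφ.differentiable two_ne_zero 0) h0).mul_continuousAt hβ.continuousAt
  have hsum := ((HasQuadraticPart.of_isLittleO herror).add hpull).mul_continuousAt hJc.continuousAt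
  refine ⟨_, _, _, hsum.congr (.of_forall fun x => ?_),
    planeJacobian φ 0 ^ 2 * (pw φ 0).2 ^ 2, ?_, ?_⟩
  · rw [kernelForm_eq_secondForm (hF₂.comp hφ), secondForm_comp_right hF₂ hφ]
    exact congrArg _ (sub_add_cancel _ _)
  · have hβ0 : (pw φ 0).2 ≠ 0 := by
      rw [planeJacobian, hker, mul_zero, sub_zero] at hJ
      exact right_ne_zero_of_mul hJ
    exact mul_ne_zero (pow_ne_zero 2 hJ) (pow_ne_zero 2 hβ0)
  · simp only [planeJacobian, hker]
    ring

end IsKernelNormalized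

end KernelInvariants

section Transport

variable {F G : ℝ × ℝ → R3} {φ : ℝ × ℝ → ℝ × ℝ} {Φ : R3 → R3}

theorem whitneyDet_eq (hF : ContDiff ℝ 2 F) :
    whitneyDet F = det3 (pu F 0) (fderiv ℝ (fderiv ℝ F) 0 (1, 0) (0, 1))
      (fderiv ℝ (fderiv ℝ F) 0 (0, 1) (0, 1)) := by
  rw [whitneyDet, pu_pw_eq hF, pw_pw_eq hF]

theorem pu_comp_left (hΦ : Differentiable ℝ Φ) (hF : Differentiable ℝ F) (x : ℝ × ℝ) :
    pu (Φ ∘ F) x = fderiv ℝ Φ (F x) (pu F x) := by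
  rw [pu, fderiv_comp x (hΦ _) (hF x)]
  rfl

theorem pw_comp_left (hΦ : Differentiable ℝ Φ) (hF : Differentiable ℝ F) (x : ℝ × ℝ) :
    pw (Φ ∘ F) x = fderiv ℝ Φ (F x) (pw F x) := by
  rw [pw, fderiv_comp x (hΦ _) (hF x)]
  rfl

namespace IsKernelNormalized

theorem pu_comp_right (hF : IsKernelNormalized F) (hφ : Differentiable ℝ φ) (h0 : φ 0 = 0) :
    pu (F ∘ φ) 0 = (pu φ 0).1 • pu F 0 := by
  rw [pu_comp (hF.contDiff.differentiable (by norm_num)) hφ, h0, hF.pw_eq_zero, smul_zero, add_zero]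

theorem fderiv_fderiv_comp_right (hF : IsKernelNormalized F) (hφ : ContDiff ℝ 2 φ) (h0 : φ 0 = 0)
    (v w : ℝ × ℝ) :
    fderiv ℝ (fderiv ℝ (F ∘ φ)) 0 v w =
      fderiv ℝ (fderiv ℝ F) 0 (fderiv ℝ φ 0 v) (fderiv ℝ φ 0 w) +
        (fderiv ℝ (fderiv ℝ φ) 0 v w).1 • pu F 0 := by
  rw [fderiv_fderiv_comp_apply (hF.contDiff.of_le (by norm_num)) hφ, h0,
    fderiv_apply_eq_pu_add_pw F, hF.pw_eq_zero, smul_zero, add_zero]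

theorem pw_pw_comp_right (hF : IsKernelNormalized F) (hφ : ContDiff ℝ 2 φ) (h0 : φ 0 = 0)
    (hker : (pw φ 0).1 = 0) :
    pw (pw (F ∘ φ)) 0 = (pw (pw φ) 0).1 • pu F 0 + (pw φ 0).2 ^ 2 • pw (pw F) 0 := by
  have hF₂ : ContDiff ℝ 2 F := hF.contDiff.of_le (by norm_num)
  have hker' : fderiv ℝ φ 0 (0, 1) = (pw φ 0).2 • (0, 1) := Prod.ext (by simpa) (by simp [pw])
  rw [pw_pw_eq (hF₂.comp hφ), hF.fderiv_fderiv_comp_right hφ h0, hker', map_smul, map_smul,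
    _root_.smul_apply, smul_smul, ← sq, pw_pw_eq hF₂, pw_pw_eq hφ, add_comm]

theorem whitneyDet_comp_right (hF : IsKernelNormalized F) (hφ : ContDiff ℝ 2 φ) (h0 : φ 0 = 0)
    (hker : (pw φ 0).1 = 0) :
    whitneyDet (F ∘ φ) = (pu φ 0).1 ^ 2 * (pw φ 0).2 ^ 3 * whitneyDet F := by
  have hF₂ : ContDiff ℝ 2 F := hF.contDiff.of_le (by norm_num)
  have hker' : fderiv ℝ φ 0 (0, 1) = (pw φ 0).2 • (0, 1) := Prod.ext (by simpa) (by simp [pw])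
  have htrans : fderiv ℝ φ 0 (1, 0) = (pu φ 0).1 • (1, 0) + (pu φ 0).2 • (0, 1) := by
    ext <;> simp [pu]
  rw [whitneyDet_eq (hF₂.comp hφ), hF.fderiv_fderiv_comp_right hφ h0,
    hF.fderiv_fderiv_comp_right hφ h0, hF.pu_comp_right (hφ.differentiable two_ne_zero) h0,
    hker', htrans, whitneyDet_eq hF₂]
  simp only [map_smul, map_add, _root_.smul_apply, _root_.add_apply, det3_eq, Pi.add_apply,
    Pi.smul_apply, smul_eq_mul]
  ring

theorem fderiv_fderiv_comp_left (hF : IsKernelNormalized F) (hΦ : ContDiff ℝ 2 Φ) (v : ℝ × ℝ) :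
    fderiv ℝ (fderiv ℝ (Φ ∘ F)) 0 v (0, 1) =
      fderiv ℝ Φ (F 0) (fderiv ℝ (fderiv ℝ F) 0 v (0, 1)) := by
  have hpw : fderiv ℝ F 0 (0, 1) = 0 := hF.pw_eq_zero
  rw [fderiv_fderiv_comp_apply hΦ (hF.contDiff.of_le (by norm_num)), hpw, map_zero, zero_add]

theorem comp_left (hF : IsKernelNormalized F) (hΦ : ContDiff ℝ 3 Φ)
    (hinj : Function.Injective (fderiv ℝ Φ (F 0))) : IsKernelNormalized (Φ ∘ F) := by
  have hFd := hF.contDiff.differentiable (by norm_num)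
  have hΦd := hΦ.differentiable (by norm_num)
  refine ⟨hΦ.comp hF.contDiff, ?_, ?_⟩
  · rw [pu_comp_left hΦd hFd]
    exact (map_ne_zero_iff _ hinj).2 hF.pu_ne_zero
  · rw [pw_comp_left hΦd hFd, hF.pw_eq_zero, map_zero]

theorem pw_pw_comp_left (hF : IsKernelNormalized F) (hΦ : ContDiff ℝ 2 Φ) :
    pw (pw (Φ ∘ F)) 0 = fderiv ℝ Φ (F 0) (pw (pw F) 0) := by
  have hF₂ : ContDiff ℝ 2 F := hF.contDiff.of_le (by norm_num)
  rw [pw_pw_eq (hΦ.comp hF₂), hF.fderiv_fderiv_comp_left hΦ, pw_pw_eq hF₂]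

theorem whitneyDet_comp_left (hF : IsKernelNormalized F) (hΦ : ContDiff ℝ 2 Φ) :
    whitneyDet (Φ ∘ F) = (fderiv ℝ Φ (F 0)).det * whitneyDet F := by
  have hF₂ : ContDiff ℝ 2 F := hF.contDiff.of_le (by norm_num)
  rw [whitneyDet_eq (hΦ.comp hF₂), hF.fderiv_fderiv_comp_left hΦ, hF.fderiv_fderiv_comp_left hΦ,
    pu_comp_left (hΦ.differentiable two_ne_zero) (hF₂.differentiable two_ne_zero), det3_map,
    whitneyDet_eq hF₂]

end IsKernelNormalized

theorem IsLocalDiffeoAt.exists_contDiff_eventuallyEq {E : Type*} [NormedAddCommGroup E]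
    [NormedSpace ℝ E] [HasContDiffBump E] [FiniteDimensional ℝ E] {f : E → E} {p : E}
    (hf : IsLocalDiffeoAt f p) :
    ∃ g : E → E, ContDiff ℝ 3 g ∧ g =ᶠ[𝓝 p] f ∧ Function.Injective (fderiv ℝ g p) := by
  obtain ⟨hfs, f', hf', hleft, -⟩ := hf
  have hnear : ∀ᶠ x in 𝓝 p, ContDiffAt ℝ ((3 : ℕ∞) : WithTop ℕ∞) f x :=
    (hfs.of_le (by norm_cast)).eventually (by simp)
  obtain ⟨g, hg, -, hgf⟩ := exists_contDiff_hasCompactSupport_eventuallyEq hnear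
  refine ⟨g, hg, hgf, ?_⟩
  rw [hgf.fderiv_eq]
  have hid : HasFDerivAt (f' ∘ f) (.id ℝ E) p := (hasFDerivAt_id p).congr_of_eventuallyEq hleft
  have hcomp := (hf'.differentiableAt (by simp)).hasFDerivAt.comp p
    (hfs.differentiableAt (by simp)).hasFDerivAt
  exact Function.LeftInverse.injective (g := fderiv ℝ f' (f p)) fun v =>
    DFunLike.congr_fun (hcomp.unique hid) v

namespace IsKernelNormalized

theorem exists_factorization (hF : IsKernelNormalized F) (hG : IsKernelNormalized G)
    (h : AEquivAt F 0 G 0) :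
    ∃ φ Φ, ContDiff ℝ 3 φ ∧ φ 0 = 0 ∧ (pw φ 0).1 = 0 ∧ planeJacobian φ 0 ≠ 0 ∧
      ContDiff ℝ 3 Φ ∧ Function.Injective (fderiv ℝ Φ (F 0)) ∧ (Φ ∘ F) ∘ φ =ᶠ[𝓝 0] G := by
  obtain ⟨φ₀, Φ₀, hφ₀, h0, hΦ₀, hG'⟩ := h
  obtain ⟨φ, hφ, hφeq, hφinj⟩ := hφ₀.exists_contDiff_eventuallyEq
  obtain ⟨Φ, hΦ, hΦeq, hΦinj⟩ := hΦ₀.exists_contDiff_eventuallyEq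
  have hφ0 : φ 0 = 0 := hφeq.self_of_nhds.trans h0
  have hfactor : (Φ ∘ F) ∘ φ =ᶠ[𝓝 0] G := by
    have hFφ : Tendsto (F ∘ φ) (𝓝 0) (𝓝 (F 0)) :=
      (hF.contDiff.continuous.comp hφ.continuous).tendsto' 0 _ (by simp [hφ0])
    filter_upwards [hφeq, hG', hFφ.eventually hΦeq] with x hx hGx hΦx
    rw [← hGx, ← hx]
    exact hΦx
  have hΦF := hF.comp_left hΦ hΦinj
  have hpw : (pw φ 0).1 • pu (Φ ∘ F) 0 = 0 := by
    have := (pw_congr hfactor).self_of_nhds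
    rwa [pw_comp (hΦF.contDiff.differentiable (by norm_num)) (hφ.differentiable (by norm_num)),
      hφ0, hΦF.pw_eq_zero, smul_zero, add_zero, hG.pw_eq_zero] at this
  exact ⟨φ, Φ, hφ, hφ0, (smul_eq_zero_iff_left hΦF.pu_ne_zero).1 hpw,
    injective_fderiv_iff_planeJacobian_ne_zero.1 hφinj, hΦ, hΦinj, hfactor⟩

theorem whitneyDet_eq_zero_of_aEquivAt (hF : IsKernelNormalized F) (hG : IsKernelNormalized G)
    (h : AEquivAt F 0 G 0) (hD : whitneyDet F = 0) : whitneyDet G = 0 := by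
  obtain ⟨φ, Φ, hφ, h0, hker, -, hΦ, hinj, hfactor⟩ := hF.exists_factorization hG h
  rw [whitneyDet, ← (pu_congr hfactor).self_of_nhds, ← (pu_congr (pw_congr hfactor)).self_of_nhds,
    ← (pw_congr (pw_congr hfactor)).self_of_nhds, ← whitneyDet,
    (hF.comp_left hΦ hinj).whitneyDet_comp_right (hφ.of_le (by norm_num)) h0 hker,
    hF.whitneyDet_comp_left (hΦ.of_le (by norm_num)), hD, mul_zero, mul_zero]

theorem exists_hasQuadraticPart_of_aEquivAt (hF : IsKernelNormalized F)
    (hG : IsKernelNormalized G) (h : AEquivAt F 0 G 0) {A B C : ℝ}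
    (hQ : HasQuadraticPart (kernelForm F) A B C) :
    ∃ A' B' C', HasQuadraticPart (kernelForm G) A' B' C' ∧
      ∃ k ≠ 0, B' ^ 2 - 4 * A' * C' = k ^ 2 * (B ^ 2 - 4 * A * C) := by
  obtain ⟨φ, Φ, hφ, h0, hker, hJ, hΦ, hinj, hfactor⟩ := hF.exists_factorization hG h
  obtain ⟨d, hd, hleft⟩ := hF.exists_hasQuadraticPart_comp_left (hΦ.of_le (by norm_num)) hinj hQ
  obtain ⟨A', B', C', hright, k, hk, hdisc⟩ :=
    (hF.comp_left hΦ hinj).exists_hasQuadraticPart_comp_right (hφ.of_le (by norm_num)) h0 hker hJ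
      hleft
  refine ⟨A', B', C', hright.congr ?_, k * d, mul_ne_zero hk hd, by rw [hdisc]; ring⟩
  filter_upwards [pu_congr hfactor, pw_congr hfactor, pw_congr (pw_congr hfactor)] with x h₁ h₂ h₃
  rw [kernelForm, h₁, h₂, h₃, kernelForm]

theorem linearIndependent_of_aEquivAt (hF : IsKernelNormalized F) (hG : IsKernelNormalized G)
    (h : AEquivAt F 0 G 0) (hfold : LinearIndependent ℝ ![pu F 0, pw (pw F) 0]) :
    LinearIndependent ℝ ![pu G 0, pw (pw G) 0] := by
  obtain ⟨φ, Φ, hφ, h0, hker, hJ, hΦ, hinj, hfactor⟩ := hF.exists_factorization hG h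
  have hφ₂ : ContDiff ℝ 2 φ := hφ.of_le (by norm_num)
  have hΦ₂ : ContDiff ℝ 2 Φ := hΦ.of_le (by norm_num)
  have hΦF := hF.comp_left hΦ hinj
  have himage := hfold.map' (fderiv ℝ Φ (F 0) : R3 →ₗ[ℝ] R3) (LinearMap.ker_eq_bot.2 hinj)
  have hpu : pu G 0 = (pu φ 0).1 • fderiv ℝ Φ (F 0) (pu F 0) +
      (0 : ℝ) • fderiv ℝ Φ (F 0) (pw (pw F) 0) := by
    rw [← (pu_congr hfactor).self_of_nhds,
      hΦF.pu_comp_right (hφ.differentiable (by norm_num)) h0,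
      pu_comp_left (hΦ.differentiable (by norm_num)) (hF.contDiff.differentiable (by norm_num)),
      zero_smul, add_zero]
  have hpww : pw (pw G) 0 = (pw (pw φ) 0).1 • fderiv ℝ Φ (F 0) (pu F 0) +
      (pw φ 0).2 ^ 2 • fderiv ℝ Φ (F 0) (pw (pw F) 0) := by
    rw [← (pw_congr (pw_congr hfactor)).self_of_nhds, hΦF.pw_pw_comp_right hφ₂ h0 hker,
      hF.pw_pw_comp_left hΦ₂,
      pu_comp_left (hΦ.differentiable (by norm_num)) (hF.contDiff.differentiable (by norm_num))]
  rw [hpu, hpww, LinearIndependent.pair_add_smul_add_smul_iff]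
  rw [planeJacobian, hker, mul_zero, sub_zero] at hJ
  refine ⟨?_, ?_⟩
  · convert himage using 1
    ext i : 1
    fin_cases i <;> rfl
  · simpa using hJ

end IsKernelNormalized

end Transport

section FoldMaps

theorem contDiff_vec3 {E : Type*} [NormedAddCommGroup E] [NormedSpace ℝ E] {n : WithTop ℕ∞}
    {f g h : E → ℝ} (hf : ContDiff ℝ n f) (hg : ContDiff ℝ n g) (hh : ContDiff ℝ n h) :
    ContDiff ℝ n fun x => ![f x, g x, h x] :=
  contDiff_pi.2 fun i => by fin_cases i <;> assumption

/-- The map `(u, w) ↦ (u, w², w b(u, w²))`, the normal form of a surface folded along `w = 0`. -/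
def foldMap (b : ℝ × ℝ → ℝ) (x : ℝ × ℝ) : R3 :=
  ![x.1, x.2 ^ 2, x.2 * b (x.1, x.2 ^ 2)]

variable {b : ℝ × ℝ → ℝ}

theorem foldMap_zero (b : ℝ × ℝ → ℝ) : foldMap b 0 = 0 := by
  ext i
  fin_cases i <;> simp [foldMap]

theorem contDiff_foldMap {n : WithTop ℕ∞} (hb : ContDiff ℝ n b) : ContDiff ℝ n (foldMap b) :=
  contDiff_vec3 (by fun_prop) (by fun_prop) (by fun_prop)

theorem fderiv_vec3_apply {E : Type*} [NormedAddCommGroup E] [NormedSpace ℝ E] {f g h : E → ℝ}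
    {x : E} (hf : DifferentiableAt ℝ f x) (hg : DifferentiableAt ℝ g x)
    (hh : DifferentiableAt ℝ h x) (v : E) :
    fderiv ℝ (fun y => ![f y, g y, h y]) x v =
      ![fderiv ℝ f x v, fderiv ℝ g x v, fderiv ℝ h x v] := by
  rw [fderiv_pi fun i => by fin_cases i <;> assumption]
  ext i
  fin_cases i <;> rfl

theorem hasFDerivAt_comp_sq {c : ℝ × ℝ → ℝ} (hc : Differentiable ℝ c) (x : ℝ × ℝ) :
    HasFDerivAt (fun y : ℝ × ℝ => c (y.1, y.2 ^ 2))
      (pu c (x.1, x.2 ^ 2) • .fst ℝ ℝ ℝ + (2 * x.2 * pw c (x.1, x.2 ^ 2)) • .snd ℝ ℝ ℝ) x := by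
  have hsq := hasFDerivAt_fst.prodMk ((hasFDerivAt_snd (𝕜 := ℝ) (E := ℝ) (F := ℝ) (p := x)).pow 2)
  refine ((hc (x.1, x.2 ^ 2)).hasFDerivAt.comp x hsq).congr_fderiv ?_
  ext <;> simp [fderiv_apply_eq_pu_add_pw c]

theorem pu_foldMap (hb : Differentiable ℝ b) (x : ℝ × ℝ) :
    pu (foldMap b) x = ![1, 0, x.2 * pu b (x.1, x.2 ^ 2)] := by
  have hb' := hasFDerivAt_comp_sq hb x
  unfold foldMap
  rw [pu, fderiv_vec3_apply (by fun_prop) (by fun_prop) (by fun_prop), fderiv_fst,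
    ((hasFDerivAt_snd (𝕜 := ℝ) (p := x)).pow 2).fderiv,
    (hasFDerivAt_snd.fun_mul hb').fderiv]
  simp

theorem pw_foldMap (hb : Differentiable ℝ b) (x : ℝ × ℝ) :
    pw (foldMap b) x = ![0, 2 * x.2, b (x.1, x.2 ^ 2) + 2 * x.2 ^ 2 * pw b (x.1, x.2 ^ 2)] := by
  have hb' := hasFDerivAt_comp_sq hb x
  unfold foldMap
  rw [pw, fderiv_vec3_apply (by fun_prop) (by fun_prop) (by fun_prop), fderiv_fst,
    ((hasFDerivAt_snd (𝕜 := ℝ) (p := x)).pow 2).fderiv,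
    (hasFDerivAt_snd.fun_mul hb').fderiv]
  simp only [Nat.succ_eq_add_one, Nat.reduceAdd, ContinuousLinearMap.coe_fst',
    Nat.add_one_sub_one, pow_one, nsmul_eq_mul, Nat.cast_ofNat, smul_apply,
    ContinuousLinearMap.coe_snd', smul_eq_mul, mul_one, smul_add, add_apply, mul_zero, zero_add,
    Matrix.vecCons_inj, and_true, true_and]
  ring

theorem fderiv_pw_foldMap (hb : ContDiff ℝ 2 b) (x v : ℝ × ℝ) :
    fderiv ℝ (pw (foldMap b)) x v =
      ![0, 2 * v.2, v.1 * (pu b (x.1, x.2 ^ 2) + 2 * x.2 ^ 2 * pu (pw b) (x.1, x.2 ^ 2)) +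
        v.2 * (6 * x.2 * pw b (x.1, x.2 ^ 2) + 4 * x.2 ^ 3 * pw (pw b) (x.1, x.2 ^ 2))] := by
  have hbd := hb.differentiable two_ne_zero
  have htd : Differentiable ℝ (pw b) :=
    (contDiff_pw hb (m := 1) (by norm_num)).differentiable one_ne_zero
  have hb' := hasFDerivAt_comp_sq hbd x
  have ht' := hasFDerivAt_comp_sq htd x
  have hsq := ((hasFDerivAt_snd (𝕜 := ℝ) (p := x)).pow 2).const_mul 2
  rw [funext (pw_foldMap hbd), fderiv_vec3_apply (by fun_prop) (by fun_prop) (by fun_prop),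
    (hasFDerivAt_const 0 x).fderiv, (hasFDerivAt_snd.const_mul 2).fderiv,
    (hb'.fun_add (hsq.fun_mul ht')).fderiv]
  simp only [Nat.succ_eq_add_one, Nat.reduceAdd, zero_apply, smul_apply,
    ContinuousLinearMap.coe_snd', smul_eq_mul, smul_add, Nat.add_one_sub_one, pow_one,
    nsmul_eq_mul, Nat.cast_ofNat, add_apply, ContinuousLinearMap.coe_fst', Matrix.vecCons_inj,
    and_true, true_and]
  ring

theorem pu_pw_foldMap_zero (hb : ContDiff ℝ 2 b) : pu (pw (foldMap b)) 0 = ![0, 0, pu b 0] := by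
  rw [pu, fderiv_pw_foldMap hb]
  simp [← Prod.zero_eq_mk]

theorem pw_pw_foldMap (hb : ContDiff ℝ 2 b) (x : ℝ × ℝ) :
    pw (pw (foldMap b)) x =
      ![0, 2, 6 * x.2 * pw b (x.1, x.2 ^ 2) + 4 * x.2 ^ 3 * pw (pw b) (x.1, x.2 ^ 2)] := by
  rw [pw, fderiv_pw_foldMap hb]
  simp

theorem isKernelNormalized_foldMap (hb : ContDiff ℝ 3 b) (h0 : b 0 = 0) :
    IsKernelNormalized (foldMap b) := by
  have hbd := hb.differentiable (by norm_num)
  refine ⟨contDiff_foldMap hb, fun h => ?_, ?_⟩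
  · simpa [pu_foldMap hbd] using congrFun h 0
  · rw [Prod.zero_eq_mk] at h0
    simp [pw_foldMap hbd, h0]

theorem linearIndependent_foldMap (hb : ContDiff ℝ 2 b) :
    LinearIndependent ℝ ![pu (foldMap b) 0, pw (pw (foldMap b)) 0] := by
  rw [pu_foldMap (hb.differentiable two_ne_zero), pw_pw_foldMap hb, LinearIndependent.pair_iff]
  intro s t h
  exact ⟨by simpa using congrFun h 0, by simpa using congrFun h 1⟩

theorem whitneyDet_foldMap (hb : ContDiff ℝ 2 b) : whitneyDet (foldMap b) = -2 * pu b 0 := by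
  rw [whitneyDet, pu_foldMap (hb.differentiable two_ne_zero), pw_pw_foldMap hb,
    pu_pw_foldMap_zero hb, det3_eq]
  simp [mul_comm]

theorem kernelForm_foldMap (hb : ContDiff ℝ 2 b) (x : ℝ × ℝ) :
    kernelForm (foldMap b) x = -2 * b (x.1, x.2 ^ 2) + 8 * x.2 ^ 2 * pw b (x.1, x.2 ^ 2) +
      8 * x.2 ^ 4 * pw (pw b) (x.1, x.2 ^ 2) := by
  have hbd := hb.differentiable two_ne_zero
  rw [kernelForm, pu_foldMap hbd, pw_foldMap hbd, pw_pw_foldMap hb, det3_eq]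
  simp only [Fin.isValue, Matrix.cons_val_zero, Matrix.cons_val_one, Matrix.cons_val, one_mul,
    zero_mul, mul_zero, sub_self, sub_zero, add_zero, neg_mul]
  ring

theorem hasQuadraticPart_kernelForm_foldMap (hb : ContDiff ℝ 2 b) {p : ℝ → ℝ} {B : ℝ × ℝ → ℝ}
    (hp : Differentiable ℝ p) (hB : Differentiable ℝ B)
    (h : ∀ᶠ x in 𝓝 0, b x = x.1 ^ 2 * p x.1 + x.2 * B x) :
    HasQuadraticPart (kernelForm (foldMap b)) (-2 * p 0) 0 (6 * B 0) := by
  have hsq : Continuous fun x : ℝ × ℝ => (x.1, x.2 ^ 2) := by fun_prop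
  have hsq0 : ((0 : ℝ × ℝ).1, (0 : ℝ × ℝ).2 ^ 2) = 0 := by simp
  have hpwb : pw b 0 = B 0 := by
    have hderiv := (((hasFDerivAt_fst (𝕜 := ℝ) (p := (0 : ℝ × ℝ))).pow 2).fun_mul
      ((hp 0).hasFDerivAt.comp 0 hasFDerivAt_fst)).fun_add
        (hasFDerivAt_snd.fun_mul (hB 0).hasFDerivAt)
    rw [pw, (hderiv.congr_of_eventuallyEq h).fderiv]
    simp
  have hu : HasQuadraticPart (fun x : ℝ × ℝ => x.1 ^ 2) 1 0 0 := by simp [HasQuadraticPart]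
  have hw : HasQuadraticPart (fun x : ℝ × ℝ => x.2 ^ 2) 0 0 1 := by simp [HasQuadraticPart]
  have hpc := hp.continuous
  have hBc := hB.continuous
  have hbt : Continuous (pw b) := (contDiff_pw hb (m := 1) (by norm_num)).continuous
  have hbtt : Continuous (pw (pw b)) :=
    (contDiff_pw (contDiff_pw hb (m := 1) (by norm_num)) (m := 0) (by norm_num)).continuous
  have hsum := (hu.mul_continuousAt (c := fun x => -2 * p x.1) (by fun_prop)).add
    (hw.mul_continuousAt (c := fun x => -2 * B (x.1, x.2 ^ 2) + 8 * pw b (x.1, x.2 ^ 2) +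
      8 * x.2 ^ 2 * pw (pw b) (x.1, x.2 ^ 2)) (by fun_prop))
  convert hsum.congr ?_ using 1
  · simp
  · simp
  · simp only [hsq0, hpwb]
    simp only [Prod.fst_zero, neg_mul, mul_zero, Prod.snd_zero, ne_eq, OfNat.ofNat_ne_zero,
      not_false_eq_true, zero_pow, zero_mul, add_zero]
    ring
  · filter_upwards [(hsq.tendsto' 0 0 hsq0).eventually h] with x hx
    rw [kernelForm_foldMap hb, hx]
    ring

end FoldMaps

section WhitneyFold

theorem exists_contDiff_eventually_sq_eq {k : ℝ × ℝ → ℝ} (hk : ContDiff ℝ ∞ k) (h0 : 0 < k 0) :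
    ∃ r : ℝ × ℝ → ℝ, ContDiff ℝ ∞ r ∧ r 0 ≠ 0 ∧ ∀ᶠ x in 𝓝 0, r x ^ 2 = k x := by
  have hpos : ∀ᶠ x in 𝓝 0, 0 < k x := hk.continuous.continuousAt.eventually (lt_mem_nhds h0)
  obtain ⟨r, hr, -, hrk⟩ := exists_contDiff_hasCompactSupport_eventuallyEq
    (hpos.mono fun x hx => hk.contDiffAt.sqrt hx.ne')
  refine ⟨r, hr, ?_, ?_⟩
  · rw [hrk.self_of_nhds]
    exact (Real.sqrt_pos.2 h0).ne'
  · filter_upwards [hrk, hpos] with x hx hkx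
    rw [hx, Real.sq_sqrt hkx.le]

theorem exists_contDiff_eventually_mul_eq_one {k : ℝ × ℝ → ℝ} (hk : ContDiff ℝ ∞ k)
    (h0 : k 0 ≠ 0) : ∃ r : ℝ × ℝ → ℝ, ContDiff ℝ ∞ r ∧ ∀ᶠ x in 𝓝 0, k x * r x = 1 := by
  have hne : ∀ᶠ x in 𝓝 0, k x ≠ 0 := hk.continuous.continuousAt.eventually_ne h0
  obtain ⟨r, hr, -, hrk⟩ := exists_contDiff_hasCompactSupport_eventuallyEq
    (hne.mono fun x hx => hk.contDiffAt.inv hx)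
  refine ⟨r, hr, ?_⟩
  filter_upwards [hrk, hne] with x hx hkx
  rw [hx, Pi.inv_apply, mul_inv_cancel₀ hkx]

theorem contDiff_planeJacobian {φ : ℝ × ℝ → ℝ × ℝ} (hφ : ContDiff ℝ ∞ φ) :
    ContDiff ℝ ∞ (planeJacobian φ) := by
  have hpu := contDiff_pu hφ (m := ∞) le_rfl
  have hpw := contDiff_pw hφ (m := ∞) le_rfl
  unfold planeJacobian
  fun_prop

theorem planeJacobian_prodMk {f g : ℝ × ℝ → ℝ} (hf : Differentiable ℝ f) (hg : Differentiable ℝ g)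
    (x : ℝ × ℝ) :
    planeJacobian (fun y => (f y, g y)) x = pu f x * pw g x - pu g x * pw f x := by
  rw [planeJacobian, pu_prodMk hf hg, pw_prodMk hf hg]

theorem planeJacobian_prodMk_comp {f k g : ℝ × ℝ → ℝ} (hf : Differentiable ℝ f)
    (hk : Differentiable ℝ k) (hg : Differentiable ℝ g) (x : ℝ × ℝ) :
    planeJacobian (fun y => (f y, g (f y, k y))) x =
      pw g (f x, k x) * planeJacobian (fun y => (f y, k y)) x := by
  have hfk : Differentiable ℝ fun y => (f y, k y) := hf.prodMk hk
  refine (planeJacobian_prodMk hf (hg.comp hfk) x).trans ?_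
  rw [planeJacobian_prodMk hf hk, pu_comp hg hfk, pw_comp hg hfk, pu_prodMk hf hk, pw_prodMk hf hk]
  simp only [smul_eq_mul]
  ring

theorem pw_planeJacobian_prodMk {f g : ℝ × ℝ → ℝ} (hf : ContDiff ℝ 2 f) (hg : ContDiff ℝ 2 g)
    {x : ℝ × ℝ} (hfw : pw f x = 0) (hgw : pw g x = 0) :
    pw (planeJacobian fun y => (f y, g y)) x = pu f x * pw (pw g) x - pu g x * pw (pw f) x := by
  have hdiff {k : ℝ × ℝ → ℝ} (hk : ContDiff ℝ 2 k) :
      DifferentiableAt ℝ (pu k) x ∧ DifferentiableAt ℝ (pw k) x :=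
    ⟨(contDiff_pu hk (m := 1) (by norm_num)).differentiable one_ne_zero x,
      (contDiff_pw hk (m := 1) (by norm_num)).differentiable one_ne_zero x⟩
  obtain ⟨hfu', hfw'⟩ := hdiff hf
  obtain ⟨hgu', hgw'⟩ := hdiff hg
  rw [funext (planeJacobian_prodMk (hf.differentiable (by simp)) (hg.differentiable (by simp))), pw,
    fderiv_fun_sub (hfu'.fun_mul hgw') (hgu'.fun_mul hfw'), fderiv_fun_mul hfu' hgw',
    fderiv_fun_mul hgu' hfw', hfw, hgw]
  simp [pw]

theorem planeJacobian_congr {φ ψ : ℝ × ℝ → ℝ × ℝ} {p : ℝ × ℝ} (h : φ =ᶠ[𝓝 p] ψ) :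
    planeJacobian φ =ᶠ[𝓝 p] planeJacobian ψ := by
  filter_upwards [pu_congr h, pw_congr h] with x hu hw
  rw [planeJacobian, hu, hw, planeJacobian]

theorem pw_add_snd_mul {a : ℝ → ℝ} {N : ℝ × ℝ → ℝ} (ha : Differentiable ℝ a)
    (hN : Differentiable ℝ N) (x : ℝ × ℝ) :
    pw (fun y => a y.1 + y.2 * N y) x = N x + x.2 * pw N x := by
  have ha' : HasFDerivAt (fun y : ℝ × ℝ => a y.1) _ x :=
    (ha x.1).hasFDerivAt.comp x hasFDerivAt_fst
  rw [pw, (ha'.fun_add (hasFDerivAt_snd.fun_mul (hN x).hasFDerivAt)).fderiv]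
  simp [pw, add_comm]

variable {f g : ℝ × ℝ → ℝ}

-- In the coordinates `(f, J)` one has `∂g/∂J = J / K` with `K` the Jacobian of `(f, J)`, so `g`
-- has no linear term in `J`.
theorem eventually_eq_planeJacobian_mul_of_eq_add_mul (hf : Differentiable ℝ f)
    {J : ℝ × ℝ → ℝ} (hJ : J = planeJacobian fun x => (f x, g x)) (hJd : Differentiable ℝ J)
    {G N r : ℝ × ℝ → ℝ} (hG : Differentiable ℝ G) (hN : Differentiable ℝ N)
    (hψ0 : (f 0, J 0) = 0) (hGg : ∀ᶠ x in 𝓝 0, G (f x, J x) = g x)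
    (hGN : ∀ᶠ y in 𝓝 0, G y = G (y.1, 0) + y.2 * N y)
    (hr : ∀ᶠ x in 𝓝 0, planeJacobian (fun y => (f y, J y)) x * r x = 1) :
    ∀ᶠ x in 𝓝 0, N (f x, J x) = J x * (r x - pw N (f x, J x)) := by
  have hψlim : Tendsto (fun x => (f x, J x)) (𝓝 0) (𝓝 0) :=
    (hf.continuous.prodMk hJd.continuous).tendsto' 0 0 hψ0
  have hJG : J =ᶠ[𝓝 0] planeJacobian fun y => (f y, G (f y, J y)) := by
    nth_rw 1 [hJ]
    exact planeJacobian_congr (hGg.mono fun x hx => by simp only [hx])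
  filter_upwards [hJG, hψlim.eventually (pw_congr hGN), hr] with x hJx hpw hrx
  have hG0 : Differentiable ℝ fun s : ℝ => G (s, 0) := by fun_prop
  rw [planeJacobian_prodMk_comp hf hJd hG, hpw, pw_add_snd_mul hG0 hN] at hJx
  linear_combination -r x * hJx - (N (f x, J x) + J x * pw N (f x, J x)) * hrx

theorem exists_eventually_eq_comp_add_planeJacobian_sq_mul (hf : ContDiff ℝ ∞ f)
    (hg : ContDiff ℝ ∞ g) (hf0 : f 0 = 0) (hfu : pu f 0 ≠ 0) (hfw : pw f 0 = 0)
    {J : ℝ × ℝ → ℝ} (hJ : J = planeJacobian fun x => (f x, g x)) (hJ0 : J 0 = 0)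
    (hJw : pw J 0 ≠ 0) :
    ∃ (a : ℝ → ℝ) (M : ℝ × ℝ → ℝ), ContDiff ℝ ∞ a ∧ ContDiff ℝ ∞ M ∧ M 0 ≠ 0 ∧
      ∀ᶠ x in 𝓝 0, g x = a (f x) + J x ^ 2 * M x := by
  have hJs : ContDiff ℝ ∞ J := hJ ▸ contDiff_planeJacobian (hf.prodMk hg)
  have hfd := hf.differentiable (by simp)
  have hJd := hJs.differentiable (by simp)
  have hψ : ContDiff ℝ ∞ fun x => (f x, J x) := hf.prodMk hJs
  have hψ0 : (f 0, J 0) = 0 := by rw [hf0, hJ0, Prod.mk_zero_zero]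
  have hK : planeJacobian (fun x => (f x, J x)) 0 ≠ 0 := by
    rw [planeJacobian_prodMk hfd hJd, hfw, mul_zero, sub_zero]
    exact mul_ne_zero hfu hJw
  obtain ⟨θ, hθ, hθψ, -⟩ := exists_contDiff_local_inverse hψ
    (injective_fderiv_iff_planeJacobian_ne_zero.2 hK)
  have hgθ : ContDiff ℝ ∞ (g ∘ θ) := hg.comp hθ
  obtain ⟨N, hN, hgN⟩ := exists_eventually_eq_add_mul hgθ
  obtain ⟨r, hr, hKr⟩ := exists_contDiff_eventually_mul_eq_one (contDiff_planeJacobian hψ) hK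
  have hNw : ContDiff ℝ ∞ (pw N) := contDiff_pw hN le_rfl
  have hNd := hN.differentiable (by simp)
  have hMs : ContDiff ℝ ∞ fun x => r x - pw N (f x, J x) := hr.sub (hNw.comp hψ)
  have hgθψ : ∀ᶠ x in 𝓝 0, (g ∘ θ) (f x, J x) = g x :=
    hθψ.mono fun x hx => by rw [Function.comp_apply, hx]
  have hNψ := eventually_eq_planeJacobian_mul_of_eq_add_mul hfd hJ hJd
    (hgθ.differentiable (by simp)) hNd hψ0 hgθψ hgN hKr
  have hψlim : Tendsto (fun x => (f x, J x)) (𝓝 0) (𝓝 0) := hψ.continuous.tendsto' 0 0 hψ0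
  refine ⟨fun s => (g ∘ θ) (s, 0), fun x => r x - pw N (f x, J x), by fun_prop, hMs, fun hM => ?_,
    ?_⟩
  · have hder := (pw_congr hNψ).self_of_nhds
    have hcomp := pw_comp hNd (hfd.prodMk hJd) 0
    rw [pw_prodMk hfd hJd, hfw, zero_smul, zero_add, hψ0] at hcomp
    have hM' : r 0 - pw N (f 0, J 0) = 0 := hM
    rw [pw_mul hJd (hMs.differentiable (by simp)), hM', hJ0, zero_mul, mul_zero, zero_add] at hder
    have hNw0 : pw N 0 = 0 := (smul_eq_zero.1 (hcomp.symm.trans hder)).resolve_left hJw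
    have hr0 : r 0 = 0 := by simpa only [hψ0, hNw0, sub_zero] using hM
    simpa [hr0] using hKr.self_of_nhds
  · filter_upwards [hψlim.eventually hgN, hNψ, hgθψ] with x hx hNx hgx
    rw [← hgx, hx, hNx]
    ring

theorem exists_eventually_eq_comp_add_mul_sq (hf : ContDiff ℝ ∞ f) (hg : ContDiff ℝ ∞ g)
    (hf0 : f 0 = 0) (hfu : pu f 0 ≠ 0) (hfw : pw f 0 = 0) (hgw : pw g 0 = 0)
    (hfold : pu f 0 * pw (pw g) 0 - pu g 0 * pw (pw f) 0 ≠ 0) :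
    ∃ (a : ℝ → ℝ) (s : ℝ) (v : ℝ × ℝ → ℝ), ContDiff ℝ ∞ a ∧ s ≠ 0 ∧ ContDiff ℝ ∞ v ∧ v 0 = 0 ∧
      pw v 0 ≠ 0 ∧ ∀ᶠ x in 𝓝 0, g x = a (f x) + s * v x ^ 2 := by
  let J := planeJacobian fun x => (f x, g x)
  have hJs : ContDiff ℝ ∞ J := contDiff_planeJacobian (hf.prodMk hg)
  have hfd := hf.differentiable (by simp)
  have hgd := hg.differentiable (by simp)
  have hJ0 : J 0 = 0 := by
    simp only [J, planeJacobian_prodMk hfd hgd, hfw, hgw, mul_zero, sub_zero]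
  have hJw : pw J 0 ≠ 0 := by
    rwa [pw_planeJacobian_prodMk (contDiff_infty.1 hf 2) (contDiff_infty.1 hg 2) hfw hgw]
  obtain ⟨a, M, ha, hM, hM0, hgM⟩ := exists_eventually_eq_comp_add_planeJacobian_sq_mul hf hg hf0
    hfu hfw (J := J) rfl hJ0 hJw
  obtain ⟨r, hr, hr0, hrM⟩ := exists_contDiff_eventually_sq_eq (k := fun x => M x / M 0)
    (by fun_prop) (by rw [div_self hM0]; exact one_pos)
  have hJd := hJs.differentiable (by simp)
  refine ⟨a, M 0, fun x => J x * r x, ha, hM0, hJs.mul hr, by simp only [hJ0, zero_mul], ?_, ?_⟩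
  · rw [pw_mul hJd (hr.differentiable (by simp)), hJ0, zero_mul, zero_add]
    exact mul_ne_zero hJw hr0
  · filter_upwards [hgM, hrM] with x hx hrx
    rw [hx, mul_pow, hrx]
    field_simp

end WhitneyFold

section FoldNormalForm

variable {F : ℝ × ℝ → R3} {b c : ℝ × ℝ → ℝ}

theorem pu_apply (hF : Differentiable ℝ F) (i : Fin 3) (x : ℝ × ℝ) :
    pu (fun y => F y i) x = pu F x i := by
  rw [pu, fderiv_apply (hF x)]
  rfl

theorem pw_apply (hF : Differentiable ℝ F) (i : Fin 3) (x : ℝ × ℝ) :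
    pw (fun y => F y i) x = pw F x i := by
  rw [pw, fderiv_apply (hF x)]
  rfl

theorem pw_pw_apply (hF : ContDiff ℝ 2 F) (i : Fin 3) (x : ℝ × ℝ) :
    pw (pw fun y => F y i) x = pw (pw F) x i := by
  rw [funext (pw_apply (hF.differentiable two_ne_zero) i),
    pw_apply ((contDiff_pw hF (m := 1) (by norm_num)).differentiable one_ne_zero)]

/-- The target coordinates `(X₀, (X₁ - a(X₀)) / s, X₂ - y(X₀, (X₁ - a(X₀)) / s))`, which carry
`(u, a(u) + s v², y(u, v²) + v b(u, v²))` to `(u, v², v b(u, v²))`. -/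
def foldShear (a : ℝ → ℝ) (y : ℝ × ℝ → ℝ) (s : ℝ) (X : R3) : R3 :=
  ![X 0, s⁻¹ * (X 1 - a (X 0)), X 2 - y (X 0, s⁻¹ * (X 1 - a (X 0)))]

theorem isLocalDiffeoAt_foldShear {a : ℝ → ℝ} {y : ℝ × ℝ → ℝ} {s : ℝ} (ha : ContDiff ℝ ∞ a)
    (hy : ContDiff ℝ ∞ y) (hs : s ≠ 0) (p : R3) : IsLocalDiffeoAt (foldShear a y s) p := by
  refine .of_inverse (g := fun Z : R3 => ![Z 0, s * Z 1 + a (Z 0), Z 2 + y (Z 0, Z 1)])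
    (contDiff_vec3 (by fun_prop) (by fun_prop) (by fun_prop))
    (contDiff_vec3 (by fun_prop) (by fun_prop) (by fun_prop)) (fun X => ?_) (fun Z => ?_) p
  · ext i
    fin_cases i <;> simp [hs]
  · ext i
    fin_cases i <;> simp [hs]

theorem coeff_eq_zero_of_comp_eventuallyEq_foldMap_comp {φ : ℝ × ℝ → ℝ × ℝ} {Ψ : R3 → R3}
    (hF : DifferentiableAt ℝ F 0) (hFw : pw F 0 = 0) (hΨ : DifferentiableAt ℝ Ψ (F 0))
    (hb : Differentiable ℝ b) (hφ : Differentiable ℝ φ) (hφ0 : φ 0 = 0) (hφw : pw φ 0 ≠ 0)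
    (h : Ψ ∘ F =ᶠ[𝓝 0] foldMap b ∘ φ) : b 0 = 0 := by
  have hzero : pw (foldMap b ∘ φ) 0 = 0 := by
    rw [← (pw_congr h).self_of_nhds, pw, fderiv_comp 0 hΨ hF, ContinuousLinearMap.comp_apply, ← pw,
      hFw, map_zero]
  have hfold : Differentiable ℝ (foldMap b) := by
    unfold foldMap
    exact differentiable_pi.2 fun i => by fin_cases i <;> dsimp <;> fun_prop
  rw [pw_comp hfold hφ, hφ0, pu_foldMap hb, pw_foldMap hb] at hzero
  have h1 : (pw φ 0).1 = 0 := by simpa using congrFun hzero 0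
  have h2 : (pw φ 0).2 * b 0 = 0 := by simpa [← Prod.zero_eq_mk] using congrFun hzero 2
  exact (mul_eq_zero.1 h2).resolve_left fun h => hφw (Prod.ext h1 h)

theorem exists_comp_eventuallyEq_foldMap_comp (hF : ContDiff ℝ ∞ F) (hF0 : F 0 = 0)
    (hFw : pw F 0 = 0) (hFu : pu F 0 0 ≠ 0)
    (hminor : pu F 0 0 * pw (pw F) 0 1 - pu F 0 1 * pw (pw F) 0 0 ≠ 0) :
    ∃ (Ψ : R3 → R3) (b : ℝ × ℝ → ℝ) (φ : ℝ × ℝ → ℝ × ℝ), IsLocalDiffeoAt Ψ (F 0) ∧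
      ContDiff ℝ ∞ b ∧ ContDiff ℝ ∞ φ ∧ φ 0 = 0 ∧ planeJacobian φ 0 ≠ 0 ∧
      Ψ ∘ F =ᶠ[𝓝 0] foldMap b ∘ φ := by
  have hFd := hF.differentiable (by simp)
  have hcoord (i : Fin 3) : ContDiff ℝ ∞ fun x => F x i := contDiff_pi.1 hF i
  have hcoordw (i : Fin 3) : pw (fun x => F x i) 0 = 0 := by
    rw [pw_apply hFd, hFw, Pi.zero_apply]
  obtain ⟨a, s, v, ha, hs, hv, hv0, hvw, hFv⟩ :=
    exists_eventually_eq_comp_add_mul_sq (hcoord 0) (hcoord 1) (congrFun hF0 0)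
      (by rwa [pu_apply hFd]) (hcoordw 0) (hcoordw 1)
      (by simpa only [pu_apply hFd, pw_pw_apply (contDiff_infty.1 hF 2)] using hminor)
  have hφ : ContDiff ℝ ∞ fun x => (F x 0, v x) := (hcoord 0).prodMk hv
  have hφ0 : (F 0 0, v 0) = 0 := by rw [hF0, hv0, Pi.zero_apply, Prod.mk_zero_zero]
  have hJ : planeJacobian (fun x => (F x 0, v x)) 0 ≠ 0 := by
    rw [planeJacobian_prodMk ((hcoord 0).differentiable (by simp)) (hv.differentiable (by simp)),
      hcoordw, mul_zero, sub_zero, pu_apply hFd]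
    exact mul_ne_zero hFu hvw
  obtain ⟨θ, hθ, hθφ, -⟩ := exists_contDiff_local_inverse hφ
    (injective_fderiv_iff_planeJacobian_ne_zero.2 hJ)
  obtain ⟨y, b, hy, hb, hyb⟩ := exists_eventually_eq_even_add_odd ((hcoord 2).comp hθ)
  refine ⟨foldShear a y s, b, _, isLocalDiffeoAt_foldShear ha hy hs _, hb, hφ, hφ0, hJ, ?_⟩
  filter_upwards [(hφ.continuous.tendsto' 0 0 hφ0).eventually hyb, hθφ, hFv] with x hx hθx hvx
  rw [Function.comp_apply, hθx] at hx
  have hsq : s⁻¹ * (F x 1 - a (F x 0)) = v x ^ 2 := by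
    rw [hvx, add_sub_cancel_left, inv_mul_cancel_left₀ hs]
  rw [Function.comp_apply, foldShear, hsq, hx, add_sub_cancel_left, Function.comp_apply, foldMap]

theorem exists_aEquivAt_foldMap_of_minor_ne_zero (hF : ContDiff ℝ ∞ F) (hF0 : F 0 = 0)
    (hFw : pw F 0 = 0) (hFu : pu F 0 0 ≠ 0)
    (hminor : pu F 0 0 * pw (pw F) 0 1 - pu F 0 1 * pw (pw F) 0 0 ≠ 0) :
    ∃ b : ℝ × ℝ → ℝ, ContDiff ℝ ∞ b ∧ b 0 = 0 ∧ AEquivAt F 0 (foldMap b) 0 := by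
  obtain ⟨Ψ, b, φ, hΨ, hb, hφ, hφ0, hJ, h⟩ :=
    exists_comp_eventuallyEq_foldMap_comp hF hF0 hFw hFu hminor
  refine ⟨b, hb, coeff_eq_zero_of_comp_eventuallyEq_foldMap_comp
    (hF.differentiable (by simp) 0) hFw (hΨ.1.differentiableAt (by simp))
    (hb.differentiable (by simp)) (hφ.differentiable (by simp)) hφ0 (fun hw => hJ ?_) h, ?_⟩
  · simp [planeJacobian, hw]
  · have hequiv := AEquivAt.of_coordinates (.of_contDiff_of_injective hφ
      (injective_fderiv_iff_planeJacobian_ne_zero.2 hJ)) hΨ h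
    rwa [hφ0] at hequiv

theorem exists_continuousLinearEquiv_apply_eq_single {a b : R3} (h : LinearIndependent ℝ ![a, b]) :
    ∃ T : R3 ≃L[ℝ] R3, T a = Pi.single 0 1 ∧ T b = Pi.single 1 1 := by
  obtain ⟨c, hc⟩ := exists_linearIndependent_snoc_of_lt_finrank h (by simp)
  let e := basisOfLinearIndependentOfCardEqFinrank hc (by simp)
  have he : ⇑e = Fin.snoc ![a, b] c := coe_basisOfLinearIndependentOfCardEqFinrank hc (by simp)
  have happly (i : Fin 3) : e.equivFun (e i) = Pi.single i 1 := by
    ext j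
    rw [Module.Basis.equivFun_self, Pi.single_apply]
    simp only [eq_comm]
  refine ⟨e.equivFun.toContinuousLinearEquiv, ?_, ?_⟩
  · simpa [he, Fin.snoc] using happly 0
  · simpa [he, Fin.snoc] using happly 1

theorem isLocalDiffeoAt_clm_sub_const (T : R3 ≃L[ℝ] R3) (c p : R3) :
    IsLocalDiffeoAt (fun X => T (X - c)) p :=
  .of_inverse (g := fun Y => T.symm Y + c) (by fun_prop) (by fun_prop) (by simp) (by simp) p

theorem fderiv_equiv_comp_apply (T : R3 ≃L[ℝ] R3) (F : ℝ × ℝ → R3) (x v : ℝ × ℝ) :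
    fderiv ℝ (fun y => T (F y)) x v = T (fderiv ℝ F x v) :=
  congrArg (· v) (T.comp_fderiv (f := F))

theorem exists_aEquivAt_foldMap (hF : ContDiff ℝ ∞ F) (hFw : pw F 0 = 0)
    (hfold : LinearIndependent ℝ ![pu F 0, pw (pw F) 0]) :
    ∃ b : ℝ × ℝ → ℝ, ContDiff ℝ ∞ b ∧ b 0 = 0 ∧ AEquivAt F 0 (foldMap b) 0 := by
  obtain ⟨T, hTu, hTw⟩ := exists_continuousLinearEquiv_apply_eq_single hfold
  let G : ℝ × ℝ → R3 := fun x => T (F x - F 0)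
  have hG : ContDiff ℝ ∞ G := by fun_prop
  have hGF : AEquivAt F 0 G 0 :=
    .of_coordinates (ψ := id) (.of_inverse contDiff_id contDiff_id (fun _ => rfl) (fun _ => rfl) 0)
      (isLocalDiffeoAt_clm_sub_const T (F 0) (F 0)) (.of_forall fun _ => rfl)
  have hpu : pu G 0 = Pi.single 0 1 := by
    rw [← hTu, pu, fderiv_equiv_comp_apply, fderiv_sub_const, pu]
  have hpw : pw G = fun x => T (pw F x) := by
    ext1 x
    rw [pw, fderiv_equiv_comp_apply, fderiv_sub_const, pw]
  have hpww : pw (pw G) 0 = Pi.single 1 1 := by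
    rw [← hTw, hpw, pw, fderiv_equiv_comp_apply, ← pw]
  obtain ⟨b, hb, hb0, hGb⟩ := exists_aEquivAt_foldMap_of_minor_ne_zero hG (by simp [G])
    (by simp only [hpw, hFw, map_zero]) (by simp [hpu]) (by simp [hpu, hpww])
  exact ⟨b, hb, hb0, hGF.trans hGb⟩

end FoldNormalForm

section Recognition

variable {F : ℝ × ℝ → R3} {b c m : ℝ × ℝ → ℝ}

theorem isLocalDiffeoAt_foldTarget {φ r : ℝ × ℝ → ℝ} (hφ : ContDiff ℝ ∞ φ) (hr : ContDiff ℝ ∞ r)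
    (hφu : pu φ 0 ≠ 0) (hr0 : r 0 ≠ 0) :
    IsLocalDiffeoAt (fun X : R3 => ![φ (X 0, X 1), X 1, X 2 * r (X 0, X 1)]) 0 := by
  have hcoord (i : Fin 3) : HasFDerivAt (fun X : R3 => X i) _ 0 := hasFDerivAt_apply (𝕜 := ℝ) i 0
  have hplane : HasFDerivAt (fun X : R3 => (X 0, X 1)) _ 0 := (hcoord 0).prodMk (hcoord 1)
  have hcomp {k : ℝ × ℝ → ℝ} (hk : ContDiff ℝ ∞ k) :
      HasFDerivAt (fun X : R3 => k (X 0, X 1)) _ 0 :=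
    (hk.differentiable (by simp) (0, 0)).hasFDerivAt.comp (0 : R3) hplane
  have hthird := (hcoord 2).fun_mul (hcomp hr)
  refine .of_contDiff_of_injective
    (contDiff_vec3 (by fun_prop) (by fun_prop) (by fun_prop)) ?_
  refine (injective_iff_map_eq_zero _).2 fun V hV => ?_
  rw [fderiv_vec3_apply (hcomp hφ).differentiableAt (hcoord 1).differentiableAt
    hthird.differentiableAt, (hcomp hφ).fderiv, (hcoord 1).fderiv, hthird.fderiv] at hV
  have h1 : V 1 = 0 := by simpa using congrFun hV 1
  have h2 : V 2 = 0 := by simpa [hr0, ← Prod.zero_eq_mk] using congrFun hV 2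
  have h0 : V 0 = 0 := by
    simpa [fderiv_apply_eq_pu_add_pw φ, h1, hφu, ← Prod.zero_eq_mk] using congrFun hV 0
  ext i
  fin_cases i <;> assumption

theorem aEquivAt_foldMap_of_eventually_eq_mul {φ : ℝ × ℝ → ℝ} (hφ : ContDiff ℝ ∞ φ)
    (hm : ContDiff ℝ ∞ m) (hφ0 : φ 0 = 0) (hφu : pu φ 0 ≠ 0) (hm0 : m 0 ≠ 0)
    (h : ∀ᶠ x in 𝓝 0, b x = m x * c (φ x, x.2)) : AEquivAt (foldMap b) 0 (foldMap c) 0 := by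
  obtain ⟨r, hr, hmr⟩ := exists_contDiff_eventually_mul_eq_one hm hm0
  have hr0 : r 0 ≠ 0 := right_ne_zero_of_mul_eq_one hmr.self_of_nhds
  have hsq0 : ((0 : ℝ × ℝ).1, (0 : ℝ × ℝ).2 ^ 2) = 0 := by simp
  have hsq : Tendsto (fun x : ℝ × ℝ => (x.1, x.2 ^ 2)) (𝓝 0) (𝓝 0) :=
    Continuous.tendsto' (by fun_prop) 0 0 hsq0
  have hφsq : ContDiff ℝ ∞ fun x : ℝ × ℝ => φ (x.1, x.2 ^ 2) := by fun_prop
  have hsource : IsLocalDiffeoAt (fun x : ℝ × ℝ => (φ (x.1, x.2 ^ 2), x.2)) 0 := by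
    refine .of_contDiff_of_injective (hφsq.prodMk contDiff_snd)
      (injective_fderiv_iff_planeJacobian_ne_zero.2 ?_)
    rw [planeJacobian_prodMk (hφsq.differentiable (by simp)) differentiable_snd, pu, pw, pu, pw,
      (hasFDerivAt_comp_sq (hφ.differentiable (by simp)) 0).fderiv, fderiv_snd]
    simpa [← Prod.zero_eq_mk] using hφu
  have htarget := isLocalDiffeoAt_foldTarget hφ hr hφu hr0
  rw [← foldMap_zero b] at htarget
  have hequiv := AEquivAt.of_coordinates (g := foldMap c) hsource htarget ?_
  · rwa [hsq0, hφ0] at hequiv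
  filter_upwards [hsq.eventually h, hsq.eventually hmr] with x hb hmr
  ext i
  fin_cases i
  · rfl
  · rfl
  · change x.2 * b (x.1, x.2 ^ 2) * r (x.1, x.2 ^ 2) = x.2 * c (φ (x.1, x.2 ^ 2), x.2 ^ 2)
    rw [hb]
    linear_combination x.2 * c (φ (x.1, x.2 ^ 2), x.2 ^ 2) * hmr

theorem aEquivAt_foldMap_fst (hb : ContDiff ℝ ∞ b) (h0 : b 0 = 0) (hbu : pu b 0 ≠ 0) :
    AEquivAt (foldMap b) 0 (foldMap Prod.fst) 0 :=
  aEquivAt_foldMap_of_eventually_eq_mul hb contDiff_const h0 hbu one_ne_zero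
    (.of_forall fun x => (one_mul (b x)).symm)

theorem pu_fst_mul {r : ℝ × ℝ → ℝ} (hr : DifferentiableAt ℝ r 0) :
    pu (fun x => x.1 * r x) 0 = r 0 := by
  rw [pu, (hasFDerivAt_fst.fun_mul hr.hasFDerivAt).fderiv]
  simp

theorem aEquivAt_foldMap_sq_add_mul {p : ℝ → ℝ} {B : ℝ × ℝ → ℝ} {ε : ℝ} (hp : ContDiff ℝ ∞ p)
    (hB : ContDiff ℝ ∞ B) (h : ∀ᶠ x in 𝓝 0, b x = x.1 ^ 2 * p x.1 + x.2 * B x)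
    (hε : 0 < ε * (p 0 * B 0)) :
    AEquivAt (foldMap b) 0 (foldMap fun x => x.1 ^ 2 + ε * x.2) 0 := by
  have hε0 : ε ≠ 0 := left_ne_zero_of_mul hε.ne'
  have hB0 : B 0 ≠ 0 := right_ne_zero_of_mul (right_ne_zero_of_mul hε.ne')
  obtain ⟨R, hR, hBR⟩ := exists_contDiff_eventually_mul_eq_one hB hB0
  obtain ⟨r, hr, hr0, hrsq⟩ :=
    exists_contDiff_eventually_sq_eq (k := fun x => ε * p x.1 * R x) (by fun_prop) (by
      have hR0 : B 0 * R 0 = 1 := hBR.self_of_nhds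
      have hpos : 0 < ε * (p 0 * B 0) * R 0 ^ 2 :=
        mul_pos hε (pow_two_pos_of_ne_zero (right_ne_zero_of_mul_eq_one hR0))
      convert hpos using 1
      linear_combination -ε * p 0 * R 0 * hR0)
  refine aEquivAt_foldMap_of_eventually_eq_mul (φ := fun x => x.1 * r x) (m := fun x => ε⁻¹ * B x)
    (by fun_prop) (by fun_prop) (by simp) ?_ (mul_ne_zero (inv_ne_zero hε0) hB0) ?_
  · rwa [pu_fst_mul (hr.differentiable (by simp) 0)]
  · filter_upwards [h, hBR, hrsq] with x hx hBRx hrx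
    rw [hx, mul_pow, hrx]
    field_simp
    linear_combination -x.1 ^ 2 * p x.1 * hBRx

theorem exists_eventually_eq_sq_mul_add_mul (hb : ContDiff ℝ ∞ b) (h0 : b 0 = 0)
    (hbu : pu b 0 = 0) : ∃ (p : ℝ → ℝ) (B : ℝ × ℝ → ℝ), ContDiff ℝ ∞ p ∧ ContDiff ℝ ∞ B ∧
      ∀ᶠ x in 𝓝 0, b x = x.1 ^ 2 * p x.1 + x.2 * B x := by
  have hfst : Tendsto (fun x : ℝ × ℝ => x.1) (𝓝 0) (𝓝 0) := continuous_fst.tendsto' 0 0 rfl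
  obtain ⟨B, hB, hbB⟩ := exists_eventually_eq_add_mul hb
  obtain ⟨q, hq, hbq⟩ := exists_eventually_eq_add_mul_real (f := fun t => b (t, 0)) (by fun_prop)
  have hq0 : q 0 = 0 := by
    have hbq' : b =ᶠ[𝓝 0] fun x => x.1 * q x.1 + x.2 * B x := by
      filter_upwards [hbB, hfst.eventually hbq] with x hbB hbq
      rw [hbB, hbq, ← Prod.zero_eq_mk, h0, zero_add]
    have hpu := (pu_congr hbq').self_of_nhds
    have hqx : HasFDerivAt (fun x : ℝ × ℝ => q x.1) _ 0 :=
      (hq.differentiable (by simp) 0).hasFDerivAt.comp (0 : ℝ × ℝ) hasFDerivAt_fst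
    have hBx := (hB.differentiable (by simp) 0).hasFDerivAt
    have hsum := (hasFDerivAt_fst.fun_mul hqx).fun_add (hasFDerivAt_snd.fun_mul hBx)
    rw [hbu, pu, hsum.fderiv] at hpu
    simpa using hpu.symm
  obtain ⟨p, hp, hqp⟩ := exists_eventually_eq_add_mul_real hq
  refine ⟨p, B, hp, hB, ?_⟩
  filter_upwards [hbB, hfst.eventually hbq, hfst.eventually hqp] with x hbB hbq hqp
  rw [hbB, hbq, hqp, hq0, ← Prod.zero_eq_mk, h0]
  ring

theorem linearIndependent_of_whitneyDet_ne_zero (h : whitneyDet F ≠ 0) :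
    LinearIndependent ℝ ![pu F 0, pw (pw F) 0] := by
  convert (linearIndependent_of_det3_ne_zero h).comp ![0, 2] (by decide) using 1
  ext1 i
  fin_cases i <;> rfl

theorem aEquivAt_foldMap_fst_iff (hF : ContDiff ℝ ∞ F) (hFu : pu F 0 ≠ 0) (hFw : pw F 0 = 0) :
    AEquivAt F 0 (foldMap Prod.fst) 0 ↔ whitneyDet F ≠ 0 := by
  have hFn : IsKernelNormalized F := ⟨contDiff_infty.1 hF 3, hFu, hFw⟩
  refine ⟨fun h hD => ?_, fun hD => ?_⟩
  · have hfst :=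
      hFn.whitneyDet_eq_zero_of_aEquivAt (isKernelNormalized_foldMap contDiff_fst rfl) h hD
    rw [whitneyDet_foldMap contDiff_fst, pu, fderiv_fst] at hfst
    norm_num at hfst
  · obtain ⟨b, hb, hb0, hFb⟩ :=
      exists_aEquivAt_foldMap hF hFw (linearIndependent_of_whitneyDet_ne_zero hD)
    refine hFb.trans (aEquivAt_foldMap_fst hb hb0 fun hbu => hD ?_)
    have hbn := isKernelNormalized_foldMap (contDiff_infty.1 hb 3) hb0
    refine hbn.whitneyDet_eq_zero_of_aEquivAt hFn (hFb.symm hF.continuous.continuousAt) ?_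
    rw [whitneyDet_foldMap (contDiff_infty.1 hb 2), hbu, mul_zero]

theorem hasQuadraticPart_kernelForm_foldMap_sq (ε : ℝ) :
    HasQuadraticPart (kernelForm (foldMap fun x => x.1 ^ 2 + ε * x.2)) (-2) 0 (6 * ε) := by
  simpa using hasQuadraticPart_kernelForm_foldMap (b := fun x => x.1 ^ 2 + ε * x.2) (by fun_prop)
    (p := fun _ => 1) (B := fun _ => ε) (by fun_prop) (by fun_prop) (.of_forall fun x => by ring)

theorem isKernelNormalized_foldMap_sq (ε : ℝ) :
    IsKernelNormalized (foldMap fun x => x.1 ^ 2 + ε * x.2) :=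
  isKernelNormalized_foldMap (by fun_prop) (by simp)

theorem whitneyDet_eq_zero_of_aEquivAt_foldMap_sq (hF : ContDiff ℝ ∞ F) (hFu : pu F 0 ≠ 0)
    (hFw : pw F 0 = 0) {ε : ℝ} (h : AEquivAt F 0 (foldMap fun x => x.1 ^ 2 + ε * x.2) 0) :
    whitneyDet F = 0 := by
  have hS := isKernelNormalized_foldMap_sq ε
  exact hS.whitneyDet_eq_zero_of_aEquivAt ⟨contDiff_infty.1 hF 3, hFu, hFw⟩
    (h.symm hF.continuous.continuousAt)
    (hS.whitneyDet_eq_zero_of_hasQuadraticPart (hasQuadraticPart_kernelForm_foldMap_sq ε))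

theorem aEquivAt_foldMap_sq_iff (hF : ContDiff ℝ ∞ F) (hFu : pu F 0 ≠ 0) (hFw : pw F 0 = 0)
    {A B C ε : ℝ} (hε : ε ≠ 0) (hQ : HasQuadraticPart (kernelForm F) A B C) :
    AEquivAt F 0 (foldMap fun x => x.1 ^ 2 + ε * x.2) 0 ↔
      LinearIndependent ℝ ![pu F 0, pw (pw F) 0] ∧ 0 < ε * (B ^ 2 - 4 * A * C) := by
  have hFn : IsKernelNormalized F := ⟨contDiff_infty.1 hF 3, hFu, hFw⟩
  refine ⟨fun h => ⟨?_, ?_⟩, fun ⟨hfold, hdisc⟩ => ?_⟩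
  · exact (isKernelNormalized_foldMap_sq ε).linearIndependent_of_aEquivAt hFn
      (h.symm hF.continuous.continuousAt) (linearIndependent_foldMap (by fun_prop))
  · obtain ⟨A', B', C', hS, k, -, hk⟩ :=
      hFn.exists_hasQuadraticPart_of_aEquivAt (isKernelNormalized_foldMap_sq ε) h hQ
    obtain ⟨rfl, rfl, rfl⟩ := hS.unique (hasQuadraticPart_kernelForm_foldMap_sq ε)
    have hpos : 0 < k ^ 2 * (ε * (B ^ 2 - 4 * A * C)) := by
      rw [mul_left_comm, ← hk]
      nlinarith [sq_pos_of_ne_zero hε]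
    exact pos_of_mul_pos_right hpos (sq_nonneg k)
  · obtain ⟨b, hb, hb0, hFb⟩ := exists_aEquivAt_foldMap hF hFw hfold
    have hbn := isKernelNormalized_foldMap (contDiff_infty.1 hb 3) hb0
    obtain ⟨A', B', C', hQb, k, hk, hk'⟩ := hFn.exists_hasQuadraticPart_of_aEquivAt hbn hFb hQ
    have hbu : pu b 0 = 0 := by
      have := hbn.whitneyDet_eq_zero_of_hasQuadraticPart hQb
      rw [whitneyDet_foldMap (contDiff_infty.1 hb 2)] at this
      linarith
    obtain ⟨p, β, hp, hβ, hbp⟩ := exists_eventually_eq_sq_mul_add_mul hb hb0 hbu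
    obtain ⟨rfl, rfl, rfl⟩ := hQb.unique (hasQuadraticPart_kernelForm_foldMap
      (contDiff_infty.1 hb 2) (hp.differentiable (by simp)) (hβ.differentiable (by simp)) hbp)
    refine hFb.trans (aEquivAt_foldMap_sq_add_mul hp hβ hbp ?_)
    have hpos := mul_pos (sq_pos_of_ne_zero hk) hdisc
    rw [mul_left_comm, ← hk'] at hpos
    linarith

end Recognition

section NormalRuledSurface

theorem dot3_comm (a b : R3) : dot3 a b = dot3 b a := by
  simp only [dot3, mul_comm]

theorem sq_det3 (a b c : R3) : det3 a b c ^ 2 =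
    dot3 a a * (dot3 b b * dot3 c c - dot3 b c ^ 2) -
      dot3 a b * (dot3 a b * dot3 c c - dot3 b c * dot3 a c) +
      dot3 a c * (dot3 a b * dot3 b c - dot3 b b * dot3 a c) := by
  simp only [det3_eq, dot3]
  ring

theorem aEquivAt_crossCap_foldMap_fst :
    AEquivAt (fun x => ![x.1, x.1 * x.2, x.2 ^ 2]) 0 (foldMap Prod.fst) 0 := by
  let swap : R3 → R3 := fun X => ![X 0, X 2, X 1]
  have hswap : ContDiff ℝ ∞ swap := contDiff_vec3 (by fun_prop) (by fun_prop) (by fun_prop)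
  have hinvol (X : R3) : swap (swap X) = X := by
    ext i
    fin_cases i <;> rfl
  refine .of_coordinates (.id 0) (.of_inverse hswap hswap hinvol hinvol _) (.of_forall fun x => ?_)
  simp [swap, foldMap, mul_comm]

theorem aEquivAt_iff_foldMap_fst {f : ℝ × ℝ → R3} {p : ℝ × ℝ} :
    AEquivAt f p (fun x => ![x.1, x.1 * x.2, x.2 ^ 2]) 0 ↔
      AEquivAt f p (foldMap Prod.fst) 0 := by
  have hcont : Continuous fun x : ℝ × ℝ => (![x.1, x.1 * x.2, x.2 ^ 2] : R3) := by fun_prop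
  exact ⟨fun h => h.trans aEquivAt_crossCap_foldMap_fst,
    fun h => h.trans (aEquivAt_crossCap_foldMap_fst.symm hcont.continuousAt)⟩

/-- The parameters `(u, w)` near `(u₀, w₀)`, translated to the origin and exchanged, so that the
rulings become the first coordinate lines. -/
def recenter (u₀ w₀ : ℝ) (x : ℝ × ℝ) : ℝ × ℝ := (u₀ + x.2, w₀ + x.1)

theorem isLocalDiffeoAt_recenter (u₀ w₀ : ℝ) (p : ℝ × ℝ) : IsLocalDiffeoAt (recenter u₀ w₀) p :=
  .of_inverse (g := fun y => (y.2 - w₀, y.1 - u₀)) (by unfold recenter; fun_prop) (by fun_prop)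
    (fun x => by simp [recenter]) (fun y => by simp [recenter]) p

theorem aEquivAt_NR_iff {γ ν : ℝ → R3} {u₀ w₀ : ℝ} {g : ℝ × ℝ → R3} {q : ℝ × ℝ} :
    AEquivAt (NR γ ν) (u₀, w₀) g q ↔ AEquivAt (NR γ ν ∘ recenter u₀ w₀) 0 g q := by
  rw [AEquivAt.comp_right_iff (isLocalDiffeoAt_recenter u₀ w₀ 0)]
  simp [recenter]

theorem contDiff_NR_comp_recenter {γ ν : ℝ → R3} {n : WithTop ℕ∞} (hγ : ContDiff ℝ n γ)
    (hν : ContDiff ℝ n ν) (u₀ w₀ : ℝ) : ContDiff ℝ n (NR γ ν ∘ recenter u₀ w₀) := by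
  unfold NR recenter
  fun_prop

theorem hasFDerivAt_NR_comp_recenter {γ ν : ℝ → R3} (hγ : Differentiable ℝ γ)
    (hν : Differentiable ℝ ν) (u₀ w₀ : ℝ) (x : ℝ × ℝ) :
    HasFDerivAt (NR γ ν ∘ recenter u₀ w₀)
      ((ContinuousLinearMap.fst ℝ ℝ ℝ).smulRight (ν (u₀ + x.2)) +
        (ContinuousLinearMap.snd ℝ ℝ ℝ).smulRight
          (NR (deriv γ) (deriv ν) (recenter u₀ w₀ x))) x := by
  have hu : HasFDerivAt (fun y : ℝ × ℝ => u₀ + y.2) (.snd ℝ ℝ ℝ) x := hasFDerivAt_snd.const_add u₀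
  have hw : HasFDerivAt (fun y : ℝ × ℝ => w₀ + y.1) (.fst ℝ ℝ ℝ) x := hasFDerivAt_fst.const_add w₀
  have hγ' := (hγ (u₀ + x.2)).hasDerivAt.hasFDerivAt.comp x hu
  have hν' := (hν (u₀ + x.2)).hasDerivAt.hasFDerivAt.comp x hu
  refine (hγ'.fun_add (hw.fun_smul hν')).congr_fderiv ?_
  ext <;> simp [NR, recenter]

theorem pu_NR_comp_recenter {γ ν : ℝ → R3} (hγ : Differentiable ℝ γ) (hν : Differentiable ℝ ν)
    (u₀ w₀ : ℝ) (x : ℝ × ℝ) : pu (NR γ ν ∘ recenter u₀ w₀) x = ν (u₀ + x.2) := by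
  simp [pu, (hasFDerivAt_NR_comp_recenter hγ hν u₀ w₀ x).fderiv]

theorem pw_NR_comp_recenter {γ ν : ℝ → R3} (hγ : Differentiable ℝ γ) (hν : Differentiable ℝ ν)
    (u₀ w₀ : ℝ) : pw (NR γ ν ∘ recenter u₀ w₀) = NR (deriv γ) (deriv ν) ∘ recenter u₀ w₀ := by
  ext1 x
  simp [pw, (hasFDerivAt_NR_comp_recenter hγ hν u₀ w₀ x).fderiv]

theorem hasQuadraticPart_comp_add_snd {k : ℝ → ℝ} {u₀ : ℝ} (hk : ContDiff ℝ 2 k) (h0 : k u₀ = 0)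
    (h1 : deriv k u₀ = 0) :
    HasQuadraticPart (fun x => k (u₀ + x.2)) 0 0 (deriv (deriv k) u₀ / 2) := by
  have hline : Tendsto (fun x : ℝ × ℝ => u₀ + x.2) (𝓝 0) (𝓝 u₀) :=
    Continuous.tendsto' (by fun_prop) 0 u₀ (by simp)
  have htaylor := (taylor_isLittleO_univ (x₀ := u₀) (n := 2) hk).comp_tendsto hline
  refine (htaylor.congr (fun x => ?_) fun x => ?_).trans_isBigO (isBigO_snd_norm.pow 2)
  · simp only [taylorWithinEval_succ, taylor_within_zero_eval, h0, CharP.cast_eq_zero, zero_add,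
      Nat.factorial_zero, Nat.cast_one, mul_one, inv_one, pow_one, one_mul,
      iteratedDerivWithin_univ, iteratedDeriv_succ, iteratedDeriv_zero, h1, smul_eq_mul, mul_zero,
      add_zero, Nat.factorial_one, Nat.reduceAdd, Function.comp_apply, add_sub_cancel_left,
      zero_mul, sub_right_inj]
    ring
  · simp

theorem hasFDerivAt_comp_add_snd {k : ℝ → ℝ} {u₀ : ℝ} (hk : DifferentiableAt ℝ k u₀) :
    HasFDerivAt (fun x : ℝ × ℝ => k (u₀ + x.2)) (deriv k u₀ • .snd ℝ ℝ ℝ) 0 := by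
  have hline : HasFDerivAt (fun x : ℝ × ℝ => u₀ + x.2) (.snd ℝ ℝ ℝ) 0 :=
    hasFDerivAt_snd.const_add u₀
  have hk' : HasDerivAt k (deriv k u₀) (u₀ + (0 : ℝ × ℝ).2) := by simpa using hk.hasDerivAt
  exact hk'.comp_hasFDerivAt (0 : ℝ × ℝ) hline

namespace FrenetSetup

variable {γ h ν : ℝ → R3} {κs κν κt : ℝ → ℝ}

theorem differentiable_deriv_γ (H : FrenetSetup γ h ν κs κν κt) : Differentiable ℝ (deriv γ) :=
  (contDiff_infty_iff_deriv.1 H.smooth_γ).2.differentiable (by simp)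

theorem differentiable_deriv_ν (H : FrenetSetup γ h ν κs κν κt) : Differentiable ℝ (deriv ν) :=
  (contDiff_infty_iff_deriv.1 H.smooth_ν).2.differentiable (by simp)

theorem deriv_deriv_ν (H : FrenetSetup γ h ν κs κν κt) (u : ℝ) :
    deriv (deriv ν) u = (κt u * κs u - deriv κν u) • deriv γ u -
      (κs u * κν u + deriv κt u) • h u - (κν u ^ 2 + κt u ^ 2) • ν u := by
  have hκν := (H.smooth_κν.differentiable (by simp) u).hasDerivAt
  have hκt := (H.smooth_κt.differentiable (by simp) u).hasDerivAt
  have hh := (H.smooth_h.differentiable (by simp) u).hasDerivAt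
  have ht := (H.differentiable_deriv_γ u).hasDerivAt
  rw [funext H.frenet_ν, ((hκν.fun_neg.fun_smul ht).fun_sub (hκt.fun_smul hh)).deriv, H.frenet_t,
    H.frenet_h]
  module

theorem pu_NR (H : FrenetSetup γ h ν κs κν κt) (u₀ w₀ : ℝ) (x : ℝ × ℝ) :
    pu (NR γ ν ∘ recenter u₀ w₀) x = ν (u₀ + x.2) :=
  pu_NR_comp_recenter (H.smooth_γ.differentiable (by simp)) (H.smooth_ν.differentiable (by simp)) ..

theorem pw_NR (H : FrenetSetup γ h ν κs κν κt) (u₀ w₀ : ℝ) (x : ℝ × ℝ) :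
    pw (NR γ ν ∘ recenter u₀ w₀) x =
      (1 - (w₀ + x.1) * κν (u₀ + x.2)) • deriv γ (u₀ + x.2) -
        ((w₀ + x.1) * κt (u₀ + x.2)) • h (u₀ + x.2) := by
  rw [pw_NR_comp_recenter (H.smooth_γ.differentiable (by simp))
    (H.smooth_ν.differentiable (by simp)), Function.comp_apply, NR, recenter, H.frenet_ν]
  module

theorem pu_pw_NR (H : FrenetSetup γ h ν κs κν κt) (u₀ w₀ : ℝ) (x : ℝ × ℝ) :
    pu (pw (NR γ ν ∘ recenter u₀ w₀)) x =
      (-κν (u₀ + x.2)) • deriv γ (u₀ + x.2) - κt (u₀ + x.2) • h (u₀ + x.2) := by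
  rw [pw_NR_comp_recenter (H.smooth_γ.differentiable (by simp))
    (H.smooth_ν.differentiable (by simp)),
    pu_NR_comp_recenter H.differentiable_deriv_γ H.differentiable_deriv_ν, H.frenet_ν]

theorem pw_pw_NR (H : FrenetSetup γ h ν κs κν κt) (u₀ w₀ : ℝ) (x : ℝ × ℝ) :
    pw (pw (NR γ ν ∘ recenter u₀ w₀)) x =
      ((w₀ + x.1) * (κs (u₀ + x.2) * κt (u₀ + x.2) - deriv κν (u₀ + x.2))) • deriv γ (u₀ + x.2) +
        (κs (u₀ + x.2) * (1 - (w₀ + x.1) * κν (u₀ + x.2)) -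
          (w₀ + x.1) * deriv κt (u₀ + x.2)) • h (u₀ + x.2) +
        (κν (u₀ + x.2) * (1 - (w₀ + x.1) * κν (u₀ + x.2)) -
          (w₀ + x.1) * κt (u₀ + x.2) ^ 2) • ν (u₀ + x.2) := by
  rw [pw_NR_comp_recenter (H.smooth_γ.differentiable (by simp))
    (H.smooth_ν.differentiable (by simp)),
    pw_NR_comp_recenter H.differentiable_deriv_γ H.differentiable_deriv_ν, Function.comp_apply,
    NR, recenter, H.frenet_t, H.deriv_deriv_ν]
  module

theorem det3_frame_ne_zero (H : FrenetSetup γ h ν κs κν κt) (u : ℝ) :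
    det3 (ν u) (deriv γ u) (h u) ≠ 0 := by
  have hsq : det3 (ν u) (deriv γ u) (h u) ^ 2 = 1 := by
    rw [sq_det3, H.unit_ν, H.unit_t, H.unit_h, H.orth_th, dot3_comm (ν u), H.orth_tν,
      dot3_comm (ν u), H.orth_hν]
    norm_num
  exact pow_ne_zero_iff two_ne_zero |>.1 (hsq.trans_ne one_ne_zero)

theorem kernelForm_NR (H : FrenetSetup γ h ν κs κν κt) (u₀ w₀ : ℝ) (x : ℝ × ℝ) :
    kernelForm (NR γ ν ∘ recenter u₀ w₀) x =
      det3 (ν (u₀ + x.2)) (deriv γ (u₀ + x.2)) (h (u₀ + x.2)) *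
        (κs (u₀ + x.2) * (1 - (w₀ + x.1) * κν (u₀ + x.2)) ^ 2 +
          -(w₀ + x.1) * ((1 - (w₀ + x.1) * κν (u₀ + x.2)) * deriv κt (u₀ + x.2)) +
          (w₀ + x.1) ^ 2 * (κs (u₀ + x.2) * κt (u₀ + x.2) - deriv κν (u₀ + x.2)) *
            κt (u₀ + x.2)) := by
  rw [kernelForm, H.pw_NR, H.pw_pw_NR, H.pu_NR]
  simp only [det3_eq, Pi.add_apply, Pi.sub_apply, Pi.smul_apply, smul_eq_mul]
  ring

variable {u₀ w₀ : ℝ}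

theorem whitneyDet_NR (H : FrenetSetup γ h ν κs κν κt) (ht : κt u₀ = 0) (hw : w₀ * κν u₀ = 1) :
    whitneyDet (NR γ ν ∘ recenter u₀ w₀) =
      deriv κt u₀ * det3 (ν u₀) (deriv γ u₀) (h u₀) := by
  have hbilin (a b t : ℝ) (x y z : R3) :
      det3 x (a • y) (b • y + t • z) = a * t * det3 x y z := by
    simp only [det3_eq, Pi.add_apply, Pi.smul_apply, smul_eq_mul]
    ring
  have hcoeff : -κν u₀ * -(w₀ * deriv κt u₀) = deriv κt u₀ := by
    linear_combination deriv κt u₀ * hw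
  rw [whitneyDet, H.pu_NR, H.pu_pw_NR, H.pw_pw_NR]
  simpa [ht, hw, hcoeff] using hbilin (-κν u₀) (-(w₀ * deriv κν u₀)) (-(w₀ * deriv κt u₀))
    (ν u₀) (deriv γ u₀) (h u₀)

theorem hasFDerivAt_slope (H : FrenetSetup γ h ν κs κν κt) (u₀ w₀ : ℝ) :
    HasFDerivAt (fun x : ℝ × ℝ => 1 - (w₀ + x.1) * κν (u₀ + x.2))
      (-(κν u₀ • .fst ℝ ℝ ℝ + (w₀ * deriv κν u₀) • .snd ℝ ℝ ℝ)) 0 := by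
  have hκν := hasFDerivAt_comp_add_snd (H.smooth_κν.differentiable (by simp) u₀)
  have hw : HasFDerivAt (fun x : ℝ × ℝ => w₀ + x.1) (.fst ℝ ℝ ℝ) 0 := hasFDerivAt_fst.const_add w₀
  refine ((hw.fun_mul hκν).const_sub 1).congr_fderiv ?_
  ext <;> simp

theorem hasQuadraticPart_kernelForm_NR (H : FrenetSetup γ h ν κs κν κt) (ht : κt u₀ = 0)
    (hw : w₀ * κν u₀ = 1) (ht' : deriv κt u₀ = 0) :
    ∃ A B C, HasQuadraticPart (kernelForm (NR γ ν ∘ recenter u₀ w₀)) A B C ∧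
      B ^ 2 - 4 * A * C = det3 (ν u₀) (deriv γ u₀) (h u₀) ^ 2 *
        (deriv (deriv κt) u₀ * (2 * κs u₀ * deriv κν u₀ + deriv (deriv κt) u₀)) := by
  have hslope := H.hasFDerivAt_slope u₀ w₀
  have htorsion := hasFDerivAt_comp_add_snd (u₀ := u₀)
    ((contDiff_infty_iff_deriv.1 H.smooth_κt).2.differentiable (by simp) u₀)
  have hcont {k : ℝ → ℝ} (hk : Continuous k) : ContinuousAt (fun x : ℝ × ℝ => k (u₀ + x.2)) 0 := by
    fun_prop
  have hκs := hcont H.smooth_κs.continuous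
  have hκt := hcont H.smooth_κt.continuous
  have hκν' := hcont (contDiff_infty_iff_deriv.1 H.smooth_κν).2.continuous
  have hE : ContinuousAt (fun x : ℝ × ℝ =>
      det3 (ν (u₀ + x.2)) (deriv γ (u₀ + x.2)) (h (u₀ + x.2))) 0 :=
    hcont (contDiff_det3 H.smooth_ν (contDiff_infty_iff_deriv.1 H.smooth_γ).2 H.smooth_h).continuous
  have hslope₀ : 1 - (w₀ + (0 : ℝ × ℝ).1) * κν (u₀ + (0 : ℝ × ℝ).2) = 0 := by simp [hw]
  have hsq := (HasQuadraticPart.mul_of_differentiableAt hslope.differentiableAt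
    hslope.differentiableAt hslope₀ hslope₀).mul_continuousAt hκs
  have hmixed := (HasQuadraticPart.mul_of_differentiableAt hslope.differentiableAt
    htorsion.differentiableAt hslope₀ (by simpa using ht')).mul_continuousAt
      (c := fun x => -(w₀ + x.1)) (by fun_prop)
  have htwist := (hasQuadraticPart_comp_add_snd (contDiff_infty.1 H.smooth_κt 2) ht
    ht').mul_continuousAt (c := fun x => (w₀ + x.1) ^ 2 *
      (κs (u₀ + x.2) * κt (u₀ + x.2) - deriv κν (u₀ + x.2)))
      (.mul (by fun_prop) ((hκs.mul hκt).sub hκν'))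
  refine ⟨_, _, _, (((hsq.add hmixed).add htwist).mul_continuousAt hE).congr
    (.of_forall fun x => ?_), ?_⟩
  · rw [H.kernelForm_NR]
    ring
  · simp only [pu, pw, hslope.fderiv, htorsion.fderiv]
    simp only [Prod.snd_zero, add_zero, neg_add_rev, add_apply, neg_apply, smul_apply,
      ContinuousLinearMap.coe_snd', smul_eq_mul, mul_zero, neg_zero,
      ContinuousLinearMap.coe_fst', mul_one, zero_add, mul_neg, neg_mul, neg_neg, Prod.fst_zero,
      ht, zero_sub]
    linear_combination det3 (ν u₀) (deriv γ u₀) (h u₀) ^ 2 * deriv (deriv κt) u₀ *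
      (2 * κs u₀ * deriv κν u₀ + deriv (deriv κt) u₀) * (w₀ * κν u₀ + 1) * hw

theorem linearIndependent_NR_iff (H : FrenetSetup γ h ν κs κν κt) (ht : κt u₀ = 0)
    (hw : w₀ * κν u₀ = 1) (ht' : deriv κt u₀ = 0) :
    LinearIndependent ℝ
      ![pu (NR γ ν ∘ recenter u₀ w₀) 0, pw (pw (NR γ ν ∘ recenter u₀ w₀)) 0] ↔
        deriv κν u₀ ≠ 0 := by
  have hpww : pw (pw (NR γ ν ∘ recenter u₀ w₀)) 0 = (-(w₀ * deriv κν u₀)) • deriv γ u₀ := by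
    simp [H.pw_pw_NR, ht, ht', hw]
  rw [H.pu_NR, hpww]
  simp only [Prod.snd_zero, add_zero]
  refine ⟨fun hind hκν => hind.ne_zero 1 (by simp [hκν]), fun hκν => ?_⟩
  have hframe : LinearIndependent ℝ ![ν u₀, deriv γ u₀] := by
    convert (linearIndependent_of_det3_ne_zero (H.det3_frame_ne_zero u₀)).comp ![0, 1]
      (by decide) using 1
    ext1 i
    fin_cases i <;> rfl
  have hcoeff : -(w₀ * deriv κν u₀) ≠ 0 :=
    neg_ne_zero.2 (mul_ne_zero (left_ne_zero_of_mul_eq_one hw) hκν)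
  simpa using (LinearIndependent.pair_smul_smul_iff isUnit_one hcoeff.isUnit).2 hframe

theorem pu_NR_ne_zero (H : FrenetSetup γ h ν κs κν κt) (u₀ w₀ : ℝ) :
    pu (NR γ ν ∘ recenter u₀ w₀) 0 ≠ 0 := fun h0 => by
  have hunit := H.unit_ν (u₀ + (0 : ℝ × ℝ).2)
  rw [← H.pu_NR u₀ w₀ 0, h0] at hunit
  simp [dot3] at hunit

theorem pw_NR_eq_zero (H : FrenetSetup γ h ν κs κν κt) (ht : κt u₀ = 0) (hw : w₀ * κν u₀ = 1) :
    pw (NR γ ν ∘ recenter u₀ w₀) 0 = 0 := by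
  simp [H.pw_NR, ht, hw]

theorem aEquivAt_crossCap_iff (H : FrenetSetup γ h ν κs κν κt) (ht : κt u₀ = 0)
    (hw : w₀ * κν u₀ = 1) :
    AEquivAt (NR γ ν) (u₀, w₀) (fun x => ![x.1, x.1 * x.2, x.2 ^ 2]) 0 ↔ deriv κt u₀ ≠ 0 := by
  have hF := contDiff_NR_comp_recenter H.smooth_γ H.smooth_ν u₀ w₀
  rw [aEquivAt_NR_iff, aEquivAt_iff_foldMap_fst,
    aEquivAt_foldMap_fst_iff hF (H.pu_NR_ne_zero u₀ w₀) (H.pw_NR_eq_zero ht hw),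
    H.whitneyDet_NR ht hw, mul_ne_zero_iff_right (H.det3_frame_ne_zero u₀)]

theorem aEquivAt_sq_add_mul_sq_iff (H : FrenetSetup γ h ν κs κν κt) (ht : κt u₀ = 0)
    (hw : w₀ * κν u₀ = 1) {ε : ℝ} (hε : ε ≠ 0) :
    AEquivAt (NR γ ν) (u₀, w₀) (fun x => ![x.1, x.2 ^ 2, x.2 * (x.1 ^ 2 + ε * x.2 ^ 2)]) 0 ↔
      deriv κt u₀ = 0 ∧ deriv κν u₀ ≠ 0 ∧
        0 < ε * (deriv (deriv κt) u₀ * (2 * κs u₀ * deriv κν u₀ + deriv (deriv κt) u₀)) := by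
  have hF := contDiff_NR_comp_recenter H.smooth_γ H.smooth_ν u₀ w₀
  have hFu := H.pu_NR_ne_zero u₀ w₀
  have hFw := H.pw_NR_eq_zero ht hw
  rw [aEquivAt_NR_iff]
  change AEquivAt _ 0 (foldMap fun x => x.1 ^ 2 + ε * x.2) 0 ↔ _
  by_cases ht' : deriv κt u₀ = 0
  · obtain ⟨A, B, C, hQ, hdisc⟩ := H.hasQuadraticPart_kernelForm_NR ht hw ht'
    rw [aEquivAt_foldMap_sq_iff hF hFu hFw hε hQ, H.linearIndependent_NR_iff ht hw ht', hdisc,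
      mul_left_comm, mul_pos_iff_of_pos_left (sq_pos_of_ne_zero (H.det3_frame_ne_zero u₀))]
    exact (and_iff_right ht').symm
  · refine iff_of_false (fun hequiv => ?_) (mt And.left ht')
    have hdet := whitneyDet_eq_zero_of_aEquivAt_foldMap_sq hF hFu hFw hequiv
    rw [H.whitneyDet_NR ht hw] at hdet
    exact mul_ne_zero ht' (H.det3_frame_ne_zero u₀) hdet

end FrenetSetup

end NormalRuledSurface
end RuledSurfaceSingularities

theorem stmt_8_general (γ h ν : ℝ → R3) (κs κν κt : ℝ → ℝ) (H : FrenetSetup γ h ν κs κν κt)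
    (u₀ w₀ : ℝ) (hsing₁ : κt u₀ = 0) (hsing₂ : w₀ * κν u₀ = 1) :
    (AEquivAt (NR γ ν) (u₀, w₀) (fun x : ℝ × ℝ => ![x.1, x.1 * x.2, x.2 ^ 2]) 0 ↔
        deriv κt u₀ ≠ 0) ∧
    (AEquivAt (NR γ ν) (u₀, w₀)
        (fun x : ℝ × ℝ => ![x.1, x.2 ^ 2, x.2 * (x.1 ^ 2 - x.2 ^ 2)]) 0 ↔
        (deriv κt u₀ = 0 ∧
          deriv (deriv κt) u₀ * (2 * κs u₀ * deriv κν u₀ + deriv (deriv κt) u₀) < 0)) ∧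
    (AEquivAt (NR γ ν) (u₀, w₀)
        (fun x : ℝ × ℝ => ![x.1, x.2 ^ 2, x.2 * (x.1 ^ 2 + x.2 ^ 2)]) 0 ↔
        (deriv κt u₀ = 0 ∧ deriv κν u₀ ≠ 0 ∧
          deriv (deriv κt) u₀ * (2 * κs u₀ * deriv κν u₀ + deriv (deriv κt) u₀) > 0)) := by
  have hS {ε : ℝ} (hε : ε ≠ 0) := H.aEquivAt_sq_add_mul_sq_iff hsing₁ hsing₂ hε
  refine ⟨H.aEquivAt_crossCap_iff hsing₁ hsing₂, ?_, ?_⟩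
  · have hminus := hS (neg_ne_zero.2 one_ne_zero)
    simp only [neg_one_mul, ← sub_eq_add_neg, Left.neg_pos_iff] at hminus
    rw [hminus]
    refine and_congr_right fun _ => and_iff_right_of_imp fun hneg hκν => hneg.not_ge ?_
    simpa [hκν] using mul_self_nonneg (deriv (deriv κt) u₀)
  · simpa only [one_mul] using hS one_ne_zero

/-- characterization of the singularities of a noncylindrical
nondevelopable normal ruled surface NR at a singular point q = (u₀,w₀). -/
theorem stmt_8 (γ h ν : ℝ → R3) (κs κν κt : ℝ → ℝ) (H : FrenetSetup γ h ν κs κν κt)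
    (hnoncyl : ∀ u : ℝ, ¬ (κν u = 0 ∧ κt u = 0)) (hnondev : ¬ ∀ u : ℝ, κt u = 0)
    (u₀ w₀ : ℝ) (hsing₁ : κt u₀ = 0) (hsing₂ : w₀ * κν u₀ = 1) :
    (AEquivAt (NR γ ν) (u₀, w₀) (fun x : ℝ × ℝ => ![x.1, x.1 * x.2, x.2 ^ 2]) 0 ↔
        deriv κt u₀ ≠ 0) ∧
    (AEquivAt (NR γ ν) (u₀, w₀)
        (fun x : ℝ × ℝ => ![x.1, x.2 ^ 2, x.2 * (x.1 ^ 2 - x.2 ^ 2)]) 0 ↔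
        (deriv κt u₀ = 0 ∧
          deriv (deriv κt) u₀ * (2 * κs u₀ * deriv κν u₀ + deriv (deriv κt) u₀) < 0)) ∧
    (AEquivAt (NR γ ν) (u₀, w₀)
        (fun x : ℝ × ℝ => ![x.1, x.2 ^ 2, x.2 * (x.1 ^ 2 + x.2 ^ 2)]) 0 ↔
        (deriv κt u₀ = 0 ∧ deriv κν u₀ ≠ 0 ∧
          deriv (deriv κt) u₀ * (2 * κs u₀ * deriv κν u₀ + deriv (deriv κt) u₀) > 0)) :=
  stmt_8_general γ h ν κs κν κt H u₀ w₀ hsing₁ hsing₂
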